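/- arXiv:1409.1691 — 3 statements merged into one kernel-verified Lean document; each statement's English description precedes it below -/
import Mathlib

section
/- Let (V,{m_n}) be an A_∞ algebra over a field of characteristic 0 and let a ∈ V be homogeneous of degree k with m_1(a) = 0. Then the maps θ_n : V^{⊗n} → V defined for homogeneous v_1,…,v_n by θ_n(v_1,…,v_n) := Σ_{p=0}^{n} (−1)^{k(|v_1|+⋯+|v_p|)} m_{n+1}(v_1,…,v_p, a, v_{p+1},…,v_n) form a strong homotopy derivation of degree k+1 of (V,{m_n}). -/
/-!
STATEMENT 5.  Strong homotopy inner derivations of `A_∞` algebras.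

A ℤ-graded vector space is a vector space `V` with an internal grading
`ℬ : ℤ → Submodule 𝕜 V`; an `A_∞` algebra structure is a family of multilinear maps
`m_n` of degree `+1` satisfying the `A_∞` relations on homogeneous elements, with the
usual Koszul signs.  The maps `θ_n` multiply by signs depending on the degrees of their
homogeneous arguments, so their values are given by an explicit function of the degrees.
-/

open Finset

namespace Stmt5

variable {𝕜 V : Type} [Field 𝕜] [AddCommGroup V] [Module 𝕜 V]

/-- The tuple obtained from `v` by replacing the `s` consecutive slots starting at the
(0-indexed) position `i` by the single entry `w`. -/
def insTup (v : ℕ → V) (i s : ℕ) (w : V) : ℕ → V := fun t =>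
  if t < i then v t else if t = i then w else v (t + s - 1)

/-- The corresponding tuple of degrees. -/
def insDeg (d : ℕ → ℤ) (i s : ℕ) (w : ℤ) : ℕ → ℤ := fun t =>
  if t < i then d t else if t = i then w else d (t + s - 1)

variable (𝕜)

/-- The `A_∞` relations for degree-one operations `{m_n}` (`n ≥ 1`) on homogeneous
elements:  for `n ≥ 1` and `v t ∈ ℬ (d t)`,
`Σ_{r+s=n+1} Σ_{i=0}^{r−1} (−1)^{d_0+⋯+d_{i−1}} m_r(v₁,…,v_i, m_s(v_{i+1},…),…,v_n) = 0`. -/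
def AInftyRel (ℬ : ℤ → Submodule 𝕜 V)
    (m : ∀ n : ℕ, MultilinearMap 𝕜 (fun _ : Fin n => V) V) : Prop :=
  ∀ n : ℕ, 1 ≤ n → ∀ (d : ℕ → ℤ) (v : ℕ → V), (∀ t, v t ∈ ℬ (d t)) →
    ∑ s ∈ Icc 1 n, ∑ i ∈ range (n + 1 - s),
      ((-1 : 𝕜) ^ (∑ t ∈ range i, d t)) •
        m (n + 1 - s) (fun j => insTup v i s (m s fun u => v (i + (u : ℕ))) (j : ℕ)) = 0

/-- The map `θ_q(v₁,…,v_q) = Σ_{p=0}^{q} (−1)^{k(|v₁|+⋯+|v_p|)} m_{q+1}(v₁,…,v_p,a,v_{p+1},…,v_q)`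
evaluated on a homogeneous tuple with degrees `d`. -/
noncomputable def innerVal (m : ∀ n : ℕ, MultilinearMap 𝕜 (fun _ : Fin n => V) V)
    (a : V) (k : ℤ) (q : ℕ) (d : ℕ → ℤ) (v : ℕ → V) : V :=
  ∑ p ∈ range (q + 1),
    ((-1 : 𝕜) ^ (k * ∑ t ∈ range p, d t)) •
      m (q + 1) (fun j => if (j : ℕ) < p then v (j : ℕ)
        else if (j : ℕ) = p then a else v ((j : ℕ) - 1))

end Stmt5

namespace Stmt5

section Reindexing

variable {M : Type*} [AddCommMonoid M]

/-- Splitting the terms of the `A_∞` relation on a tuple with a marked slot `p` according to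
whether the inner block of length `s` starting at `i` lies after, contains, or lies before
the marked slot. -/
lemma sum_marked_block (N s : ℕ) (hs : 1 ≤ s) (G : ℕ → ℕ → M) :
    ∑ p ∈ range (N + s), ∑ i ∈ range (N + 1), G p i =
      ∑ i ∈ range N, ∑ p ∈ range (N + 1), (if p ≤ i then G p (i + 1) else G (p + s - 1) i) +
        ∑ i ∈ range (N + 1), ∑ p ∈ range s, G (i + p) i := by
  have hl : ∀ i ∈ range (N + 1), ∑ p ∈ range (N + s), G p i =
      ∑ p ∈ range i, G p i + ∑ p ∈ range (N - i), G (i + s + p) i +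
        ∑ p ∈ range s, G (i + p) i := by
    intro i hi
    have hi := mem_range.1 hi
    rw [show N + s = i + s + (N - i) by omega, sum_range_add, sum_range_add]
    abel
  have hr : ∀ i ∈ range N,
      ∑ p ∈ range (N + 1), (if p ≤ i then G p (i + 1) else G (p + s - 1) i) =
        ∑ p ∈ range (i + 1), G p (i + 1) + ∑ p ∈ range (N - i), G (i + s + p) i := by
    intro i hi
    have hi := mem_range.1 hi
    rw [show N + 1 = i + 1 + (N - i) by omega, sum_range_add]
    congr 1
    · refine sum_congr rfl fun p hp => if_pos ?_
      have := mem_range.1 hp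
      omega
    · refine sum_congr rfl fun p _ => ?_
      rw [if_neg (by omega), show i + 1 + p + s - 1 = i + s + p by omega]
  rw [sum_comm, sum_congr rfl hl, sum_congr rfl hr, sum_add_distrib, sum_add_distrib,
    sum_add_distrib, sum_range_succ' (fun i => ∑ p ∈ range i, G p i),
    sum_range_succ (fun i => ∑ p ∈ range (N - i), G (i + s + p) i)]
  simp

lemma sum_marked (q : ℕ) (G : ℕ → ℕ → ℕ → M) :
    ∑ p ∈ range (q + 1), ∑ s ∈ Icc 1 (q + 1), ∑ i ∈ range (q + 1 + 1 - s), G p s i =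
      ∑ s ∈ Icc 1 q, ∑ i ∈ range (q + 1 - s),
        (∑ p ∈ range (q + 1 - s + 1), (if p ≤ i then G p s (i + 1) else G (p + s - 1) s i) +
          ∑ p ∈ range (s + 1), G (i + p) (s + 1) i) +
        ∑ p ∈ range (q + 1), G p 1 p := by
  have h : ∀ s ∈ Icc 1 (q + 1), ∑ p ∈ range (q + 1), ∑ i ∈ range (q + 1 + 1 - s), G p s i =
      ∑ i ∈ range (q + 1 - s), ∑ p ∈ range (q + 1 - s + 1),
        (if p ≤ i then G p s (i + 1) else G (p + s - 1) s i) +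
      ∑ i ∈ range (q + 1 - s + 1), ∑ p ∈ range s, G (i + p) s i := by
    intro s hs
    have hs := mem_Icc.1 hs
    rw [← sum_marked_block (q + 1 - s) s hs.1 (fun p i => G p s i),
      show q + 1 - s + s = q + 1 by omega, show q + 1 + 1 - s = q + 1 - s + 1 by omega]
  have hB : ∀ B : ℕ → M, ∑ s ∈ Icc 1 (q + 1), B s = ∑ s ∈ Icc 1 q, B (s + 1) + B 1 := by
    intro B
    rw [← sum_Ioc_add_eq_sum_Icc (by omega : 1 ≤ q + 1)]
    congr 1
    refine sum_nbij' (fun s => s - 1) (fun s => s + 1) ?_ ?_ ?_ ?_ ?_ <;>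
      intro s hs <;> simp only [mem_Ioc, mem_Icc] at hs ⊢ <;> try omega
    rw [Nat.sub_add_cancel (by omega)]
  rw [sum_comm, sum_congr rfl h, sum_add_distrib,
    hB (fun s => ∑ i ∈ range (q + 1 - s + 1), ∑ p ∈ range s, G (i + p) s i),
    sum_Icc_succ_top (by omega : 1 ≤ q + 1)]
  simp only [Nat.sub_self, range_zero, sum_empty, add_zero, sum_add_distrib, range_one,
    sum_singleton, Nat.add_sub_cancel]
  rw [add_assoc]
  congr 2
  refine sum_congr rfl fun s hs => ?_
  have := mem_Icc.1 hs
  rw [show q + 1 - (s + 1) + 1 = q + 1 - s by omega]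

end Reindexing

variable {V : Type} [AddCommGroup V] (𝕜 : Type) [Field 𝕜] [Module 𝕜 V]

lemma insTup_mem {ℬ : ℤ → Submodule 𝕜 V} {d : ℕ → ℤ} {v : ℕ → V} (hv : ∀ t, v t ∈ ℬ (d t))
    {a : V} {k : ℤ} (ha : a ∈ ℬ k) (p s t : ℕ) : insTup v p s a t ∈ ℬ (insDeg d p s k t) := by
  unfold insTup insDeg
  split_ifs
  exacts [hv _, ha, hv _]

lemma sum_insDeg_of_le (d : ℕ → ℤ) (s : ℕ) (w : ℤ) {i n : ℕ} (h : n ≤ i) :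
    ∑ t ∈ range n, insDeg d i s w t = ∑ t ∈ range n, d t := by
  refine sum_congr rfl fun t ht => if_pos ?_
  have := mem_range.1 ht
  omega

lemma sum_insDeg_add (d : ℕ → ℤ) (i s r : ℕ) (w : ℤ) :
    ∑ t ∈ range (i + 1 + r), insDeg d i s w t + ∑ u ∈ range s, d (i + u) =
      ∑ t ∈ range (i + s + r), d t + w := by
  have h : ∀ t, insDeg d i s w (i + 1 + t) = d (i + s + t) := fun t => by
    rw [insDeg, if_neg (by omega), if_neg (by omega)]
    congr 1
    omega
  rw [sum_range_add, sum_range_succ, sum_insDeg_of_le d s w le_rfl, sum_range_add d (i + s),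
    sum_range_add d i]
  simp only [h]
  simp only [insDeg, lt_irrefl, if_false, if_true]
  ring

lemma sum_insDeg_zero (d : ℕ → ℤ) (w : ℤ) {p n : ℕ} (h : p ≤ n) :
    ∑ t ∈ range (n + 1), insDeg d p 0 w t = ∑ t ∈ range n, d t + w := by
  have := sum_insDeg_add d p 0 (n - p) w
  rwa [range_zero, sum_empty, add_zero, show p + 1 + (n - p) = n + 1 by omega,
    show p + 0 + (n - p) = n by omega] at this

lemma multilinear_congr (m : ∀ n : ℕ, MultilinearMap 𝕜 (fun _ : Fin n => V) V) {n n' : ℕ}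
    (hn : n = n') {f g : ℕ → V} (h : ∀ j < n, f j = g j) :
    m n (fun j => f j) = m n' (fun j => g j) := by
  subst hn
  exact congrArg _ (funext fun j => h j j.2)

lemma insTup_eq_update (v : ℕ → V) (s : ℕ) (w : V) {i n : ℕ} (hi : i < n) :
    (fun j : Fin n => insTup v i s w j) =
      Function.update (fun j : Fin n => insTup v i s 0 j) ⟨i, hi⟩ w := by
  funext j
  by_cases h : j = ⟨i, hi⟩
  · subst h
    simp [insTup]
  · have : (j : ℕ) ≠ i := fun h' => h (Fin.ext h')
    simp [h, insTup, this]

lemma map_insTup_sum (m : ∀ n : ℕ, MultilinearMap 𝕜 (fun _ : Fin n => V) V) (v : ℕ → V)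
    (s : ℕ) {i n : ℕ} (hi : i < n) (S : Finset ℕ) (c : ℕ → 𝕜) (x : ℕ → V) :
    m n (fun j => insTup v i s (∑ p ∈ S, c p • x p) j) =
      ∑ p ∈ S, c p • m n (fun j => insTup v i s (x p) j) := by
  rw [insTup_eq_update v s _ hi, MultilinearMap.map_update_sum]
  refine sum_congr rfl fun p _ => ?_
  rw [insTup_eq_update v s (x p) hi, MultilinearMap.map_update_smul]

lemma neg_one_zpow_congr {a b : ℤ} (h : Even (a - b)) : (-1 : 𝕜) ^ a = (-1 : 𝕜) ^ b := by
  rw [← sub_add_cancel a b, zpow_add₀ (by simp), h.neg_one_zpow, one_mul]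

lemma innerVal_eq (m : ∀ n : ℕ, MultilinearMap 𝕜 (fun _ : Fin n => V) V)
    (a : V) (k : ℤ) (q : ℕ) (d : ℕ → ℤ) (v : ℕ → V) :
    innerVal 𝕜 m a k q d v = ∑ p ∈ range (q + 1),
      ((-1 : 𝕜) ^ (k * ∑ t ∈ range p, d t)) • m (q + 1) (fun j => insTup v p 0 a j) := rfl

/-- The summand of the `A_∞` relation for the tuple `v` with `a` inserted in slot `p`,
weighted by the sign with which it enters the derivation relation. -/
noncomputable def markedTerm (m : ∀ n : ℕ, MultilinearMap 𝕜 (fun _ : Fin n => V) V)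
    (a : V) (k : ℤ) (q : ℕ) (d : ℕ → ℤ) (v : ℕ → V) (p s i : ℕ) : V :=
  ((-1 : 𝕜) ^ (k + k * ∑ t ∈ range p, d t)) •
    ((-1 : 𝕜) ^ (∑ t ∈ range i, insDeg d p 0 k t)) •
      m (q + 1 + 1 - s) (fun j => insTup (insTup v p 0 a) i s
        (m s fun u => insTup v p 0 a (i + (u : ℕ))) (j : ℕ))

section Terms

variable (m : ∀ n : ℕ, MultilinearMap 𝕜 (fun _ : Fin n => V) V)
  (a : V) (k : ℤ) (q : ℕ) (d : ℕ → ℤ) (v : ℕ → V)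

lemma markedTerm_self (hma : m 1 (fun _ => a) = 0) {p : ℕ} (hp : p < q + 1) :
    markedTerm 𝕜 m a k q d v p 1 p = 0 := by
  have h : m 1 (fun u => insTup v p 0 a (p + (u : ℕ))) = 0 := by
    rw [← hma]
    congr 1
    funext u
    simp [insTup]
  rw [markedTerm, h, (m (q + 1 + 1 - 1)).map_coord_zero (⟨p, by omega⟩ : Fin (q + 1 + 1 - 1))
    (by simp [insTup]), smul_zero, smul_zero]

lemma markedTerm_after {p s i : ℕ} (hs : s ≤ q) (hpi : p ≤ i) :
    markedTerm 𝕜 m a k q d v p s (i + 1) =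
      ((-1 : 𝕜) ^ (∑ t ∈ range i, d t)) • ((-1 : 𝕜) ^ (k * ∑ t ∈ range p,
        insDeg d i s (1 + ∑ u ∈ range s, d (i + u)) t)) •
        m (q + 1 - s + 1)
          (fun j => insTup (insTup v i s (m s fun u => v (i + (u : ℕ)))) p 0 a j) := by
  have hX : m s (fun u => insTup v p 0 a (i + 1 + (u : ℕ))) = m s fun u => v (i + (u : ℕ)) := by
    refine multilinear_congr 𝕜 m rfl (f := fun u => insTup v p 0 a (i + 1 + u))
      (g := fun u => v (i + u)) fun j _ => ?_
    rw [insTup, if_neg (by omega), if_neg (by omega)]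
    congr 1
    omega
  rw [markedTerm, smul_smul, smul_smul, hX, sum_insDeg_zero d k hpi, sum_insDeg_of_le _ _ _ hpi,
    ← zpow_add₀ (by simp), ← zpow_add₀ (by simp)]
  congr 1
  · exact neg_one_zpow_congr 𝕜 ⟨k, by ring⟩
  · refine multilinear_congr 𝕜 m (by omega) fun j _ => ?_
    unfold insTup
    grind

lemma markedTerm_before {p s i : ℕ} (hs : 1 ≤ s) (hsq : s ≤ q) (hip : i < p) :
    markedTerm 𝕜 m a k q d v (p + s - 1) s i =
      ((-1 : 𝕜) ^ (∑ t ∈ range i, d t)) • ((-1 : 𝕜) ^ (k * ∑ t ∈ range p,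
        insDeg d i s (1 + ∑ u ∈ range s, d (i + u)) t)) •
        m (q + 1 - s + 1)
          (fun j => insTup (insTup v i s (m s fun u => v (i + (u : ℕ)))) p 0 a j) := by
  have hX : m s (fun u => insTup v (p + s - 1) 0 a (i + (u : ℕ))) =
      m s fun u => v (i + (u : ℕ)) := by
    refine multilinear_congr 𝕜 m rfl (f := fun u => insTup v (p + s - 1) 0 a (i + u))
      (g := fun u => v (i + u)) fun j _ => ?_
    rw [insTup, if_pos (by omega)]
  have hD := sum_insDeg_add d i s (p - i - 1) (1 + ∑ u ∈ range s, d (i + u))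
  rw [show i + 1 + (p - i - 1) = p by omega, show i + s + (p - i - 1) = p + s - 1 by omega,
    ← add_assoc, add_left_inj] at hD
  rw [markedTerm, smul_smul, smul_smul, hX, sum_insDeg_of_le _ _ _ (by omega), hD,
    ← zpow_add₀ (by simp), ← zpow_add₀ (by simp)]
  congr 1
  · congr 1
    ring
  · refine multilinear_congr 𝕜 m (by omega) fun j _ => ?_
    unfold insTup
    grind

lemma markedTerm_inside {p s i : ℕ} (hp : p ≤ s) :
    markedTerm 𝕜 m a k q d v (i + p) (s + 1) i =
      -(((-1 : 𝕜) ^ ((k + 1) + (k + 1) * ∑ t ∈ range i, d t)) •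
        ((-1 : 𝕜) ^ (k * ∑ t ∈ range p, d (i + t))) •
        m (q + 1 - s) (fun j => insTup v i s
          (m (s + 1) fun u => insTup (fun u => v (i + u)) p 0 a u) j)) := by
  have hX : m (s + 1) (fun u => insTup v (i + p) 0 a (i + (u : ℕ))) =
      m (s + 1) fun u => insTup (fun u => v (i + u)) p 0 a u := by
    refine multilinear_congr 𝕜 m rfl (f := fun u => insTup v (i + p) 0 a (i + u))
      fun j _ => ?_
    unfold insTup
    grind
  rw [markedTerm, smul_smul, smul_smul, hX, sum_insDeg_of_le _ _ _ (by omega), ← neg_smul,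
    ← zpow_add₀ (by simp), ← zpow_add₀ (by simp), sum_range_add,
    ← neg_one_mul ((-1 : 𝕜) ^ (_ : ℤ)), ← zpow_one_add₀ (by simp)]
  congr 1
  · exact neg_one_zpow_congr 𝕜 ⟨-1, by ring⟩
  · refine multilinear_congr 𝕜 m (by omega) fun j _ => ?_
    unfold insTup
    grind

lemma sum_markedTerm {ℬ : ℤ → Submodule 𝕜 V} (hmrel : AInftyRel 𝕜 ℬ m) (ha : a ∈ ℬ k)
    (hv : ∀ t, v t ∈ ℬ (d t)) (p : ℕ) :
    ∑ s ∈ Icc 1 (q + 1), ∑ i ∈ range (q + 1 + 1 - s), markedTerm 𝕜 m a k q d v p s i = 0 := by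
  simp only [markedTerm, ← smul_sum]
  rw [hmrel (q + 1) (by omega) _ _ (insTup_mem 𝕜 hv ha p 0), smul_zero]

lemma innerVal_mem {ℬ : ℤ → Submodule 𝕜 V}
    (hmdeg : ∀ n : ℕ, 1 ≤ n → ∀ (d : Fin n → ℤ) (v : Fin n → V), (∀ j, v j ∈ ℬ (d j)) →
        m n v ∈ ℬ (1 + ∑ j, d j))
    (ha : a ∈ ℬ k) (hv : ∀ t, v t ∈ ℬ (d t)) :
    innerVal 𝕜 m a k q d v ∈ ℬ ((k + 1) + ∑ t ∈ range q, d t) := by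
  rw [innerVal_eq]
  refine Submodule.sum_mem _ fun p hp => Submodule.smul_mem _ _ ?_
  have h := hmdeg (q + 1) (by omega) _ _ fun j : Fin (q + 1) => insTup_mem 𝕜 hv ha p 0 j
  have hp := mem_range.1 hp
  rw [Fin.sum_univ_eq_sum_range (insDeg d p 0 k), sum_insDeg_zero d k (by omega)] at h
  convert h using 2
  ring

end Terms

end Stmt5

open Stmt5 in
/-- Let `(V,{m_n})` be an `A_∞` algebra over a field of characteristic
`0` and `a ∈ V` homogeneous of degree `k` with `m₁(a) = 0`.  Then the maps
`θ_q(v₁,…,v_q) = Σ_p (−1)^{k(|v₁|+⋯+|v_p|)} m_{q+1}(v₁,…,v_p,a,v_{p+1},…,v_q)` form a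
strong homotopy derivation of degree `k+1` of `(V,{m_n})`: they are homogeneous of degree
`k+1` and satisfy the strong homotopy derivation relations. -/
theorem statement5 {𝕜 V : Type} [Field 𝕜] [CharZero 𝕜] [AddCommGroup V] [Module 𝕜 V]
    (ℬ : ℤ → Submodule 𝕜 V) (hgr : DirectSum.IsInternal ℬ)
    (m : ∀ n : ℕ, MultilinearMap 𝕜 (fun _ : Fin n => V) V)
    (hmdeg : ∀ n : ℕ, 1 ≤ n → ∀ (d : Fin n → ℤ) (v : Fin n → V), (∀ j, v j ∈ ℬ (d j)) →
        m n v ∈ ℬ (1 + ∑ j, d j))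
    (hmrel : AInftyRel 𝕜 ℬ m)
    (k : ℤ) (a : V) (ha : a ∈ ℬ k) (hma : m 1 (fun _ => a) = 0) :
    (∀ (q : ℕ), 1 ≤ q → ∀ (d : ℕ → ℤ) (v : ℕ → V), (∀ t, v t ∈ ℬ (d t)) →
        innerVal 𝕜 m a k q d v ∈ ℬ ((k + 1) + ∑ t ∈ Finset.range q, d t)) ∧
    (∀ (q : ℕ), 1 ≤ q → ∀ (d : ℕ → ℤ) (v : ℕ → V), (∀ t, v t ∈ ℬ (d t)) →
      ∑ s ∈ Finset.Icc 1 q, ∑ i ∈ Finset.range (q + 1 - s),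
        ( ((-1 : 𝕜) ^ (∑ t ∈ Finset.range i, d t)) •
            innerVal 𝕜 m a k (q + 1 - s)
              (insDeg d i s (1 + ∑ u ∈ Finset.range s, d (i + u)))
              (insTup v i s (m s fun u => v (i + (u : ℕ))))
          - ((-1 : 𝕜) ^ ((k + 1) + (k + 1) * ∑ t ∈ Finset.range i, d t)) •
            m (q + 1 - s) (fun j => insTup v i s
              (innerVal 𝕜 m a k s (fun u => d (i + u)) (fun u => v (i + u))) (j : ℕ)) )
        = 0) := by
  refine ⟨fun q _ d v hv => innerVal_mem 𝕜 m a k q d v hmdeg ha hv, fun q _ d v hv => ?_⟩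
  have h0 := sum_marked q (markedTerm 𝕜 m a k q d v)
  rw [Finset.sum_eq_zero fun p _ => sum_markedTerm 𝕜 m a k q d v hmrel ha hv p,
    Finset.sum_eq_zero fun p hp => markedTerm_self 𝕜 m a k q d v hma (Finset.mem_range.1 hp),
    add_zero] at h0
  rw [h0]
  refine Finset.sum_congr rfl fun s hs => Finset.sum_congr rfl fun i hi => ?_
  have hs := Finset.mem_Icc.1 hs
  have hi := Finset.mem_range.1 hi
  rw [sub_eq_add_neg, innerVal_eq, innerVal_eq, map_insTup_sum 𝕜 m v s hi, Finset.smul_sum,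
    Finset.smul_sum, ← Finset.sum_neg_distrib]
  congr 1
  · refine Finset.sum_congr rfl fun p _ => ?_
    split_ifs with hpi
    · exact (markedTerm_after 𝕜 m a k q d v hs.2 hpi).symm
    · exact (markedTerm_before 𝕜 m a k q d v hs.1 hs.2 (not_le.1 hpi)).symm
  · refine Finset.sum_congr rfl fun p hp => ?_
    exact (markedTerm_inside 𝕜 m a k q d v (Nat.lt_succ_iff.1 (Finset.mem_range.1 hp))).symm
end

section
/- Let (A,d) be a ℤ-graded vector space over a field 𝕜 of characteristic 0 with degree +1 differential d, let l_n : A^{⊗n} → A (n ≥ 2) be graded skew-symmetric maps of degree 2−n satisfying the unsuspended L_∞ relations, let k ∈ ℤ, and let θ_n : A^{⊗n} → A (n ≥ 1) be graded skew-symmetric maps of degree k−n+1 satisfying, for every n ≥ 1: d∘_1 θ_n − (−1)^{k−n+1} Σ_{m=1}^{n} θ_n∘_m d = − Σ_{i+j=n+1} (−1)^{k+j(i−1)} Σ_{σ∈USh(j,i−1)} sgn(σ) ( θ_i∘_1 l_j + (−1)^{(k+1)i} l_i∘_1 θ_j )∘σ^{−1}. Set V := ↓A, L_1 := −↓∘d∘↑,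 L_n := (−1)^{n(n−1)/2} ↓∘l_n∘↑^{⊗n} (n ≥ 2), Θ_1 := ↓∘θ_1∘↑, and Θ_n := (−1)^{n(n−1)/2} ↓∘θ_n∘↑^{⊗n} (n ≥ 2). Then {Θ_q}_{q≥1} is a strong homotopy derivation of degree k of the L_∞ algebra (V,{L_n}): for every n ≥ 1 and homogeneous v_1,…,v_n ∈ V, Σ_{j=1}^{n} Σ_{σ∈USh(j,n−j)} [ (−1)^{e(σ)} Θ_{n−j+1}(L_j(v_{σ(1)},…,v_{σ(j)}), v_{σ(j+1)},…,v_{σ(n)}) − (−1)^{k} (−1)^{e(σ)} L_{n−j+1}(Θ_j(v_{σ(1)},…,v_{σ(j)}), v_{σ(j+1)},…,v_{σ(n)}) ] = 0, and conversely. -/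
/-!
STATEMENT 7.  Equivalence of the unsuspended strong-homotopy-derivation relations on `A`
with the (suspended) strong-homotopy-derivation relations on `V = ↓A`, for `L_∞` algebras.

Conventions as in the paper: a ℤ-graded vector space is a vector space `V` with an
internal grading `ℬ : ℤ → Submodule 𝕜 V`; the underlying spaces of `A` and `V = ↓A` are
identified, an element is homogeneous of degree `e` in `V` iff it is homogeneous of degree
`e + 1` in `A`.  Operations are multilinear maps evaluated on homogeneous tuples with the
usual Koszul signs.
-/

open Finset

namespace Stmt7

variable {𝕜 V : Type} [Field 𝕜] [AddCommGroup V] [Module 𝕜 V]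

/-- `σ` is a `(j, n−j)`-unshuffle. -/
def IsUnshuffle {n : ℕ} (j : ℕ) (σ : Equiv.Perm (Fin n)) : Prop :=
  ∀ t u : Fin n, t < u → ((u : ℕ) < j ∨ j ≤ (t : ℕ)) → σ t < σ u

instance {n : ℕ} (j : ℕ) (σ : Equiv.Perm (Fin n)) : Decidable (IsUnshuffle j σ) := by
  unfold IsUnshuffle; infer_instance

/-- Exponent of the Koszul sign of `σ` acting on homogeneous elements of degrees `d`. -/
def koszulE {n : ℕ} (σ : Equiv.Perm (Fin n)) (d : ℕ → ℤ) : ℤ :=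
  ∑ p ∈ Finset.univ.filter
      (fun p : Fin n × Fin n => p.1 < p.2 ∧ σ p.2 < σ p.1), d (σ p.1) * d (σ p.2)

/-- The permuted tuple `t ↦ v (σ t)`. -/
def permV {n : ℕ} (σ : Equiv.Perm (Fin n)) (v : ℕ → V) : ℕ → V := fun t =>
  if h : t < n then v (σ ⟨t, h⟩) else 0

/-- The permuted tuple of degrees `t ↦ d (σ t)`. -/
def permD {n : ℕ} (σ : Equiv.Perm (Fin n)) (d : ℕ → ℤ) : ℕ → ℤ := fun t =>
  if h : t < n then d (σ ⟨t, h⟩) else 0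

/-- Exponent of the Koszul sign produced by evaluating `↑^{⊗n}` on elements of `V = ↓A`
of `V`-degrees `e 0, …, e (n-1)`. -/
def susExp (n : ℕ) (e : ℕ → ℤ) : ℤ := ∑ t ∈ range n, ((n : ℤ) - 1 - (t : ℤ)) * e t

variable (𝕜)

/-- Graded skew symmetry on homogeneous elements (adjacent transpositions). -/
def GradedSkewSymm (ℬ : ℤ → Submodule 𝕜 V)
    (l : ∀ n : ℕ, MultilinearMap 𝕜 (fun _ : Fin n => V) V) : Prop :=
  ∀ (n : ℕ) (d : ℕ → ℤ) (a : ℕ → V), (∀ t, a t ∈ ℬ (d t)) → ∀ t, t + 1 < n →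
    l n (fun u => if (u : ℕ) = t then a (t + 1) else if (u : ℕ) = t + 1 then a t
          else a (u : ℕ))
      = -((-1 : 𝕜) ^ (d t * d (t + 1))) • l n (fun u => a (u : ℕ))

/-- The unsuspended `L_∞` relations (`n ≥ 2`), evaluated on homogeneous elements. -/
def UnsuspLRel (ℬ : ℤ → Submodule 𝕜 V) (dA : V →ₗ[𝕜] V)
    (l : ∀ n : ℕ, MultilinearMap 𝕜 (fun _ : Fin n => V) V) : Prop :=
  ∀ n : ℕ, 2 ≤ n → ∀ (d : ℕ → ℤ) (a : ℕ → V), (∀ t, a t ∈ ℬ (d t)) →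
    dA (l n fun u => a (u : ℕ))
      - ((-1 : 𝕜) ^ (n : ℤ)) •
          ∑ m ∈ range n, ((-1 : 𝕜) ^ (∑ t ∈ range m, d t)) •
            l n (fun u => if (u : ℕ) = m then dA (a m) else a (u : ℕ))
    = ∑ j ∈ Icc 2 (n - 1),
        ∑ σ ∈ Finset.univ.filter (fun σ : Equiv.Perm (Fin n) => IsUnshuffle j σ),
          (((Equiv.Perm.sign σ : ℤ) : 𝕜) *
              ((-1 : 𝕜) ^ ((j : ℤ) * ((n : ℤ) - (j : ℤ)) + koszulE σ d))) •
            l (n + 1 - j) (fun u => if (u : ℕ) = 0 then l j (fun w => permV σ a (w : ℕ))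
              else permV σ a (j + (u : ℕ) - 1))

/-- The unsuspended derivation relations for `{θ_n}` (`n ≥ 1`):
`d∘₁θ_n − (−1)^{k−n+1} Σ_{m=1}^n θ_n∘_m d
  = − Σ_{i+j=n+1} (−1)^{k+j(i−1)} Σ_{σ∈USh(j,i−1)} sgn(σ)
      (θ_i∘₁l_j + (−1)^{(k+1)i} l_i∘₁θ_j)∘σ^{−1}`,
the sum on the right ranging over the indices where the terms make sense
(`j ≥ 2` in the first summand, `i ≥ 2` in the second), evaluated on homogeneous
elements. -/
def UnsuspLDer (ℬ : ℤ → Submodule 𝕜 V) (k : ℤ) (dA : V →ₗ[𝕜] V)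
    (l θ : ∀ n : ℕ, MultilinearMap 𝕜 (fun _ : Fin n => V) V) : Prop :=
  ∀ n : ℕ, 1 ≤ n → ∀ (d : ℕ → ℤ) (a : ℕ → V), (∀ t, a t ∈ ℬ (d t)) →
    dA (θ n fun u => a (u : ℕ))
      - ((-1 : 𝕜) ^ (k - (n : ℤ) + 1)) •
          ∑ m ∈ range n, ((-1 : 𝕜) ^ (∑ t ∈ range m, d t)) •
            θ n (fun u => if (u : ℕ) = m then dA (a m) else a (u : ℕ))
    = -( (∑ j ∈ Icc 2 n,
            ∑ σ ∈ Finset.univ.filter (fun σ : Equiv.Perm (Fin n) => IsUnshuffle j σ),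
              (((Equiv.Perm.sign σ : ℤ) : 𝕜) *
                  ((-1 : 𝕜) ^ (k + (j : ℤ) * ((n : ℤ) - (j : ℤ)) + koszulE σ d))) •
                θ (n + 1 - j) (fun u => if (u : ℕ) = 0 then
                    l j (fun w => permV σ a (w : ℕ))
                  else permV σ a (j + (u : ℕ) - 1)))
        + ∑ j ∈ Icc 1 (n - 1),
            ∑ σ ∈ Finset.univ.filter (fun σ : Equiv.Perm (Fin n) => IsUnshuffle j σ),
              (((Equiv.Perm.sign σ : ℤ) : 𝕜) *
                  ((-1 : 𝕜) ^ (k + (j : ℤ) * ((n : ℤ) - (j : ℤ))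
                    + (k + 1) * ((n : ℤ) + 1 - (j : ℤ)) + koszulE σ d))) •
                l (n + 1 - j) (fun u => if (u : ℕ) = 0 then
                    θ j (fun w => permV σ a (w : ℕ))
                  else permV σ a (j + (u : ℕ) - 1)) )

/-- Value of the suspended operation `L_n` (`L_1 := −↓∘d∘↑`,
`L_n := (−1)^{n(n−1)/2} ↓∘l_n∘↑^{⊗n}` for `n ≥ 2`). -/
noncomputable def susLVal (dA : V →ₗ[𝕜] V)
    (l : ∀ n : ℕ, MultilinearMap 𝕜 (fun _ : Fin n => V) V)
    (n : ℕ) (e : ℕ → ℤ) (v : ℕ → V) : V :=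
  if n = 1 then -(dA (v 0))
  else ((-1 : 𝕜) ^ (((n * (n - 1) / 2 : ℕ) : ℤ) + susExp n e)) • l n (fun u => v (u : ℕ))

/-- Value of the suspended operation `Θ_n := (−1)^{n(n−1)/2} ↓∘θ_n∘↑^{⊗n}`
(`Θ_1 = ↓∘θ_1∘↑`). -/
noncomputable def susTVal (θ : ∀ n : ℕ, MultilinearMap 𝕜 (fun _ : Fin n => V) V)
    (n : ℕ) (e : ℕ → ℤ) (v : ℕ → V) : V :=
  ((-1 : 𝕜) ^ (((n * (n - 1) / 2 : ℕ) : ℤ) + susExp n e)) • θ n (fun u => v (u : ℕ))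

/-- `{Θ_q}` is a strong homotopy derivation of degree `k` of the `L_∞` algebra
`(V, {L_n})`:  for all `n ≥ 1` and homogeneous `v` of `V`-degrees `e`,
`Σ_{j=1}^n Σ_{σ∈USh(j,n−j)} [(−1)^{e(σ)} Θ_{n−j+1}(L_j(v_{σ(1)},…),…,v_{σ(n)})
  − (−1)^k (−1)^{e(σ)} L_{n−j+1}(Θ_j(v_{σ(1)},…),…,v_{σ(n)})] = 0`. -/
def SusLSHDer (ℬ : ℤ → Submodule 𝕜 V) (k : ℤ) (dA : V →ₗ[𝕜] V)
    (l θ : ∀ n : ℕ, MultilinearMap 𝕜 (fun _ : Fin n => V) V) : Prop :=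
  ∀ n : ℕ, 1 ≤ n → ∀ (e : ℕ → ℤ) (v : ℕ → V), (∀ t, v t ∈ ℬ (e t + 1)) →
    ∑ j ∈ Icc 1 n,
      ∑ σ ∈ Finset.univ.filter (fun σ : Equiv.Perm (Fin n) => IsUnshuffle j σ),
        ( ((-1 : 𝕜) ^ koszulE σ e) •
            susTVal 𝕜 θ (n - j + 1)
              (fun t => if t = 0 then 1 + ∑ w ∈ range j, permD σ e w
                else permD σ e (j + t - 1))
              (fun t => if t = 0 then susLVal 𝕜 dA l j (permD σ e) (permV σ v)
                else permV σ v (j + t - 1))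
          - ((-1 : 𝕜) ^ (k + koszulE σ e)) •
            susLVal 𝕜 dA l (n - j + 1)
              (fun t => if t = 0 then k + ∑ w ∈ range j, permD σ e w
                else permD σ e (j + t - 1))
              (fun t => if t = 0 then susTVal 𝕜 θ j (permD σ e) (permV σ v)
                else permV σ v (j + t - 1)) ) = 0

end Stmt7

namespace Stmt7

section Signs

variable {𝕜 : Type} [Field 𝕜]

lemma neg_one_zpow_congr {a b : ℤ} (h : Even (a - b)) : (-1 : 𝕜) ^ a = (-1 : 𝕜) ^ b := by
  rw [← sub_add_cancel a b, zpow_add₀ (neg_ne_zero.mpr one_ne_zero), h.neg_one_zpow, one_mul]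

lemma neg_one_zpow_add (a b : ℤ) : (-1 : 𝕜) ^ (a + b) = (-1 : 𝕜) ^ a * (-1 : 𝕜) ^ b :=
  zpow_add₀ (neg_ne_zero.mpr one_ne_zero) a b

lemma neg_neg_one_zpow (a : ℤ) : -(-1 : 𝕜) ^ a = (-1 : 𝕜) ^ (a + 1) := by
  rw [neg_one_zpow_add, zpow_one, mul_neg_one]

lemma koszulE_eq_sum {n : ℕ} (σ : Equiv.Perm (Fin n)) (d : ℕ → ℤ) :
    koszulE σ d = ∑ t, ∑ u, if t < u ∧ σ u < σ t then d (σ t) * d (σ u) else 0 := by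
  rw [koszulE, Finset.sum_filter, Fintype.sum_prod_type]

/-- The sign of a permutation is the Koszul sign on elements of degree one. -/
lemma sign_eq_neg_one_zpow_koszulE {n : ℕ} (σ : Equiv.Perm (Fin n)) :
    ((Equiv.Perm.sign σ : ℤ) : 𝕜) = (-1 : 𝕜) ^ koszulE σ (fun _ => 1) := by
  have hsum (s : Finset (Fin n × Fin n)) :
      (-1 : 𝕜) ^ (∑ _p ∈ s, (1 : ℤ)) = ∏ _p ∈ s, (-1 : 𝕜) := by
    simp
  rw [koszulE]
  simp only [mul_one]
  rw [hsum, Finset.prod_filter, Fintype.prod_prod_type, Equiv.Perm.sign_eq_prod_prod_Ioi]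
  push_cast
  refine Finset.prod_congr rfl fun t _ => ?_
  have hIoi : Finset.Ioi t = Finset.univ.filter (fun u => t < u) := by ext; simp
  rw [hIoi, Finset.prod_filter]
  refine Finset.prod_congr rfl fun u _ => ?_
  by_cases htu : t < u
  · have hne : σ t ≠ σ u := fun h => htu.ne (σ.injective h)
    rcases lt_or_gt_of_ne hne with h | h
    · simp [htu, h, h.not_gt]
    · simp [htu, h, h.not_gt]
  · simp [htu]

lemma sum_indicator_lt {n : ℕ} (t : Fin n) : ∑ u : Fin n, (if u < t then (1 : ℤ) else 0) = t := by
  rw [Finset.sum_boole]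
  have : Finset.univ.filter (fun u => u < t) = Finset.Iio t := by ext; simp
  rw [this, Fin.card_Iio]

/-- The displacement of `t` counts the inversions starting at `t` minus those ending at `t`. -/
lemma perm_apply_sub_self {n : ℕ} (σ : Equiv.Perm (Fin n)) (t : Fin n) :
    ((σ t : ℕ) : ℤ) - (t : ℕ) = ∑ u, ((if t < u ∧ σ u < σ t then (1 : ℤ) else 0)
      - (if u < t ∧ σ t < σ u then (1 : ℤ) else 0)) := by
  rw [← sum_indicator_lt t, ← sum_indicator_lt (σ t),
    ← Equiv.sum_comp σ (fun u => if u < σ t then (1 : ℤ) else 0), ← Finset.sum_sub_distrib]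
  refine Finset.sum_congr rfl fun u _ => ?_
  rcases lt_trichotomy u t with h | rfl | h
  · rcases lt_or_gt_of_ne (fun h' => h.ne (σ.injective h') : σ u ≠ σ t) with h' | h' <;>
      simp [h, h', h.not_gt, h'.not_gt]
  · simp
  · rcases lt_or_gt_of_ne (fun h' => h.ne' (σ.injective h') : σ u ≠ σ t) with h' | h' <;>
      simp [h, h', h.not_gt, h'.not_gt]

lemma susExp_permD_sub {n : ℕ} (σ : Equiv.Perm (Fin n)) (e : ℕ → ℤ) :
    susExp n (permD σ e) - susExp n e
      = ∑ t, ∑ u, if t < u ∧ σ u < σ t then e (σ t) - e (σ u) else 0 := by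
  have h1 : susExp n (permD σ e) = ∑ t : Fin n, ((n : ℤ) - 1 - (t : ℕ)) * e (σ t) := by
    rw [susExp, Finset.sum_range]
    simp [permD]
  have h2 : susExp n e = ∑ t : Fin n, ((n : ℤ) - 1 - (σ t : ℕ)) * e (σ t) := by
    rw [susExp, Finset.sum_range,
      ← Equiv.sum_comp σ (fun t : Fin n => ((n : ℤ) - 1 - (t : ℕ)) * e t)]
  have h3 : susExp n (permD σ e) - susExp n e
      = ∑ t : Fin n, (((σ t : ℕ) : ℤ) - (t : ℕ)) * e (σ t) := by
    rw [h1, h2, ← Finset.sum_sub_distrib]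
    exact Finset.sum_congr rfl fun t _ => by ring
  rw [h3]
  simp only [perm_apply_sub_self, Finset.sum_mul, sub_mul, Finset.sum_sub_distrib]
  rw [Finset.sum_comm (f := fun t u => (if u < t ∧ σ t < σ u then (1 : ℤ) else 0) * e (σ t)),
    ← Finset.sum_sub_distrib]
  refine Finset.sum_congr rfl fun t _ => ?_
  rw [← Finset.sum_sub_distrib]
  refine Finset.sum_congr rfl fun u _ => ?_
  split_ifs <;> ring

/-- The suspension turns the Koszul sign into the Koszul sign times the signature. -/
lemma neg_one_zpow_koszulE_add_susExp {n : ℕ} (σ : Equiv.Perm (Fin n)) (e : ℕ → ℤ) :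
    (-1 : 𝕜) ^ (koszulE σ e + susExp n (permD σ e))
      = ((Equiv.Perm.sign σ : ℤ) : 𝕜)
        * (-1 : 𝕜) ^ (koszulE σ (fun t => e t + 1) + susExp n e) := by
  rw [sign_eq_neg_one_zpow_koszulE, ← neg_one_zpow_add]
  apply neg_one_zpow_congr
  have h : koszulE σ e + susExp n (permD σ e)
        - (koszulE σ (fun _ => 1) + (koszulE σ (fun t => e t + 1) + susExp n e))
      = 2 * ∑ t, ∑ u, if t < u ∧ σ u < σ t then -e (σ u) - 1 else 0 := by
    have hs := susExp_permD_sub σ e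
    calc _ = koszulE σ e - koszulE σ (fun _ => 1) - koszulE σ (fun t => e t + 1)
          + (susExp n (permD σ e) - susExp n e) := by ring
      _ = _ := by
        rw [hs]
        simp only [koszulE_eq_sum, Finset.mul_sum, ← Finset.sum_sub_distrib,
          ← Finset.sum_add_distrib]
        refine Finset.sum_congr rfl fun t _ => Finset.sum_congr rfl fun u _ => ?_
        split_ifs <;> ring
  rw [h]
  exact even_two_mul _

lemma susExp_comp {n j : ℕ} (hj : j ≤ n) (f : ℕ → ℤ) (c : ℤ) :
    susExp (n - j + 1) (fun t => if t = 0 then c + ∑ w ∈ range j, f w else f (j + t - 1))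
      + susExp j f = ((n : ℤ) - j) * c + susExp n f := by
  obtain ⟨m, rfl⟩ := Nat.exists_eq_add_of_le hj
  rw [Nat.add_sub_cancel_left]
  simp only [susExp]
  rw [Finset.sum_range_succ', Finset.sum_range_add]
  have h1 : ∀ t, j + (t + 1) - 1 = j + t := fun t => by omega
  simp only [Nat.add_eq_zero_iff, one_ne_zero, and_false, if_false, if_true, h1]
  have h2 : ∑ t ∈ range m, (((m + 1 : ℕ) : ℤ) - 1 - ((t + 1 : ℕ) : ℤ)) * f (j + t)
      = ∑ t ∈ range m, (((j + m : ℕ) : ℤ) - 1 - ((j + t : ℕ) : ℤ)) * f (j + t) :=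
    Finset.sum_congr rfl fun t _ => by push_cast; ring
  have h3 : ∑ t ∈ range j, (((j + m : ℕ) : ℤ) - 1 - (t : ℤ)) * f t
      = m * ∑ t ∈ range j, f t + ∑ t ∈ range j, ((j : ℤ) - 1 - (t : ℤ)) * f t := by
    rw [Finset.mul_sum, ← Finset.sum_add_distrib]
    exact Finset.sum_congr rfl fun t _ => by push_cast; ring
  rw [h2, h3]
  push_cast
  ring

lemma two_mul_triangle (n : ℕ) : 2 * ((n * (n - 1) / 2 : ℕ) : ℤ) = n * (n - 1) := by
  have h : 2 * (n * (n - 1) / 2) = n * (n - 1) :=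
    Nat.mul_div_cancel' (Nat.even_mul_pred_self n).two_dvd
  cases n with
  | zero => simp
  | succ n =>
    zify at h
    simpa using h

lemma triangle_comp {n j : ℕ} (hj : j ≤ n) :
    (((n - j + 1) * (n - j + 1 - 1) / 2 : ℕ) : ℤ) + ((j * (j - 1) / 2 : ℕ) : ℤ)
      = ((n * (n - 1) / 2 : ℕ) : ℤ) + ((n : ℤ) - j) - j * ((n : ℤ) - j) := by
  have h1 := two_mul_triangle (n - j + 1)
  have h2 := two_mul_triangle j
  have h3 := two_mul_triangle n
  rw [Nat.cast_add, Nat.cast_sub hj, Nat.cast_one] at h1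
  linarith

lemma suspension_sign {n j : ℕ} (hj : j ≤ n) (σ : Equiv.Perm (Fin n)) (e : ℕ → ℤ) (c : ℤ) :
    (-1 : 𝕜) ^ koszulE σ e
      * ((-1 : 𝕜) ^ ((((n - j + 1) * (n - j + 1 - 1) / 2 : ℕ) : ℤ)
          + susExp (n - j + 1) (fun t => if t = 0 then c + ∑ w ∈ range j, permD σ e w
            else permD σ e (j + t - 1)))
        * (-1 : 𝕜) ^ (((j * (j - 1) / 2 : ℕ) : ℤ) + susExp j (permD σ e)))
      = (-1 : 𝕜) ^ (((n * (n - 1) / 2 : ℕ) : ℤ) + susExp n e)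
        * (((Equiv.Perm.sign σ : ℤ) : 𝕜) * (-1 : 𝕜) ^ (((n : ℤ) - j) * (c + 1)
          + j * ((n : ℤ) - j) + koszulE σ (fun t => e t + 1))) := by
  have hk := neg_one_zpow_koszulE_add_susExp (𝕜 := 𝕜) σ e
  have hs := susExp_comp hj (permD σ e) c
  have ht := triangle_comp hj
  set S := susExp (n - j + 1) _
  rw [← neg_one_zpow_add, ← neg_one_zpow_add]
  have hl : (-1 : 𝕜) ^ (koszulE σ e + ((((n - j + 1) * (n - j + 1 - 1) / 2 : ℕ) : ℤ) + S
        + (((j * (j - 1) / 2 : ℕ) : ℤ) + susExp j (permD σ e))))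
      = (-1 : 𝕜) ^ (((n * (n - 1) / 2 : ℕ) : ℤ) + ((n : ℤ) - j) * (c + 1) + j * ((n : ℤ) - j))
        * (-1 : 𝕜) ^ (koszulE σ e + susExp n (permD σ e)) := by
    rw [← neg_one_zpow_add]
    apply neg_one_zpow_congr
    refine ⟨-(j * ((n : ℤ) - j)), ?_⟩
    linear_combination hs + ht
  rw [hl, hk]
  simp only [neg_one_zpow_add]
  ring

end Signs

section Compositions

variable {𝕜 V : Type} [Field 𝕜] [AddCommGroup V] [Module 𝕜 V]

/-- The composition `(f_{n+1-j} ∘₁ g_j) ∘ σ⁻¹`, without its Koszul sign. -/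
def permComp (f g : ∀ n : ℕ, MultilinearMap 𝕜 (fun _ : Fin n => V) V) {n : ℕ} (j : ℕ)
    (σ : Equiv.Perm (Fin n)) (a : ℕ → V) : V :=
  f (n + 1 - j) (fun u => if (u : ℕ) = 0 then g j (fun w => permV σ a (w : ℕ))
    else permV σ a (j + (u : ℕ) - 1))

/-- The family `l` with its unary operation replaced by `-d`. -/
noncomputable def withDifferential (dA : V →ₗ[𝕜] V)
    (l : ∀ n : ℕ, MultilinearMap 𝕜 (fun _ : Fin n => V) V) :
    ∀ n : ℕ, MultilinearMap 𝕜 (fun _ : Fin n => V) V :=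
  Function.update l 1 (MultilinearMap.ofSubsingleton 𝕜 V V (0 : Fin 1) (-dA))

lemma withDifferential_one (dA : V →ₗ[𝕜] V)
    (l : ∀ n : ℕ, MultilinearMap 𝕜 (fun _ : Fin n => V) V) (x : Fin 1 → V) :
    withDifferential dA l 1 x = -dA (x 0) := by
  simp [withDifferential]

lemma withDifferential_of_ne (dA : V →ₗ[𝕜] V)
    (l : ∀ n : ℕ, MultilinearMap 𝕜 (fun _ : Fin n => V) V) {n : ℕ} (hn : n ≠ 1) :
    withDifferential dA l n = l n := by
  simp [withDifferential, hn]

lemma susLVal_eq_susTVal (dA : V →ₗ[𝕜] V)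
    (l : ∀ n : ℕ, MultilinearMap 𝕜 (fun _ : Fin n => V) V) (n : ℕ) (e : ℕ → ℤ) (v : ℕ → V) :
    susLVal 𝕜 dA l n e v = susTVal 𝕜 (withDifferential dA l) n e v := by
  unfold susLVal susTVal
  split_ifs with h
  · subst h
    simp [withDifferential_one, susExp]
  · rw [withDifferential_of_ne dA l h]

lemma map_smul_head (n : ℕ) (f : MultilinearMap 𝕜 (fun _ : Fin (n + 1) => V) V) (c : 𝕜) (x : V)
    (y : ℕ → V) :
    f (fun u => if (u : ℕ) = 0 then c • x else y u)
      = c • f (fun u => if (u : ℕ) = 0 then x else y u) := by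
  have h (z : V) : (fun u : Fin (n + 1) => if (u : ℕ) = 0 then z else y u)
      = Function.update (fun u : Fin (n + 1) => y u) 0 z := by
    funext u
    by_cases hu : u = 0
    · subst hu; simp
    · have : (u : ℕ) ≠ 0 := fun h' => hu (Fin.ext h')
      simp [hu, this]
  rw [h, h, f.map_update_smul]

lemma susTVal_comp (f g : ∀ n : ℕ, MultilinearMap 𝕜 (fun _ : Fin n => V) V) {n j : ℕ}
    (hj : j ≤ n) (σ : Equiv.Perm (Fin n)) (e : ℕ → ℤ) (v : ℕ → V) (c : ℤ) :
    ((-1 : 𝕜) ^ koszulE σ e) •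
        susTVal 𝕜 f (n - j + 1)
          (fun t => if t = 0 then c + ∑ w ∈ range j, permD σ e w else permD σ e (j + t - 1))
          (fun t => if t = 0 then susTVal 𝕜 g j (permD σ e) (permV σ v)
            else permV σ v (j + t - 1))
      = ((-1 : 𝕜) ^ (((n * (n - 1) / 2 : ℕ) : ℤ) + susExp n e)) •
        (((Equiv.Perm.sign σ : ℤ) : 𝕜) * (-1 : 𝕜) ^ (((n : ℤ) - j) * (c + 1)
          + j * ((n : ℤ) - j) + koszulE σ (fun t => e t + 1))) • permComp f g j σ v := by
  rw [smul_smul, ← suspension_sign hj, permComp, Nat.sub_add_comm hj]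
  simp only [susTVal]
  rw [map_smul_head (n - j) (f (n - j + 1)) _ _ (fun t => permV σ v (j + t - 1)), smul_smul,
    smul_smul, mul_assoc]

lemma isUnshuffle_self_iff {n : ℕ} (σ : Equiv.Perm (Fin n)) : IsUnshuffle n σ ↔ σ = 1 := by
  constructor
  · intro h
    have hm : StrictMono σ := fun t u htu => h t u htu (Or.inl u.isLt)
    ext t
    rw [Equiv.Perm.one_apply]
    exact congrArg Fin.val (congrFun ((hm.range_inj strictMono_id).mp
      (by simp [σ.surjective.range_eq])) t)
  · rintro rfl t u htu _
    simpa using htu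

lemma koszulE_one {n : ℕ} (d : ℕ → ℤ) : koszulE (1 : Equiv.Perm (Fin n)) d = 0 := by
  rw [koszulE_eq_sum]
  refine Finset.sum_eq_zero fun t _ => Finset.sum_eq_zero fun u _ => if_neg ?_
  rintro ⟨h1, h2⟩
  exact lt_asymm h1 h2

lemma sum_unshuffle_self (dA : V →ₗ[𝕜] V)
    (l θ : ∀ n : ℕ, MultilinearMap 𝕜 (fun _ : Fin n => V) V) (n : ℕ) (d : ℕ → ℤ) (a : ℕ → V)
    (c : ℤ) :
    ∑ σ ∈ Finset.univ.filter (fun σ : Equiv.Perm (Fin n) => IsUnshuffle n σ),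
      (((Equiv.Perm.sign σ : ℤ) : 𝕜) * (-1 : 𝕜) ^ (((n : ℤ) - n) * c + n * ((n : ℤ) - n)
        + koszulE σ d)) • permComp (withDifferential dA l) θ n σ a
      = -dA (θ n fun u => a u) := by
  have h : Finset.univ.filter (fun σ : Equiv.Perm (Fin n) => IsUnshuffle n σ) = {1} := by
    ext σ
    simp [isUnshuffle_self_iff]
  have hn : n + 1 - n = 1 := by omega
  rw [h, Finset.sum_singleton, koszulE_one, permComp, hn, withDifferential_one]
  simp [permV]

lemma isUnshuffle_one_iff {N : ℕ} (σ : Equiv.Perm (Fin (N + 1))) :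
    IsUnshuffle 1 σ ↔ σ = (Fin.cycleRange (σ 0)).symm := by
  constructor
  · intro h
    have hm : StrictMono fun t : Fin N => σ t.succ := fun t u htu =>
      h _ _ (Fin.succ_lt_succ_iff.mpr htu) (Or.inr (by simp))
    have hr : Set.range (fun t : Fin N => σ t.succ) = Set.range (σ 0).succAbove := by
      rw [Fin.range_succAbove]
      ext x
      simp only [Set.mem_range, Set.mem_compl_iff, Set.mem_singleton_iff]
      constructor
      · rintro ⟨t, rfl⟩ h'
        exact Fin.succ_ne_zero t (σ.injective h')
      · intro hx
        have hx' : σ.symm x ≠ 0 := fun h' => hx (by rw [← h', Equiv.apply_symm_apply])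
        obtain ⟨t, ht⟩ := Fin.exists_succ_eq.mpr hx'
        exact ⟨t, by rw [ht, Equiv.apply_symm_apply]⟩
    have he := (hm.range_inj (Fin.strictMono_succAbove (σ 0))).mp hr
    refine Equiv.ext fun t => ?_
    refine Fin.cases ?_ (fun t => ?_) t
    · rw [Fin.cycleRange_symm_zero]
    · rw [Fin.cycleRange_symm_succ]
      exact congrFun he t
  · intro h t u htu htu'
    have ht : t ≠ 0 := by
      rintro rfl
      rcases htu' with h' | h'
      · have : (0 : ℕ) < u := htu
        omega
      · simp at h'
    obtain ⟨t, rfl⟩ := Fin.exists_succ_eq.mpr ht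
    obtain ⟨u, rfl⟩ := Fin.exists_succ_eq.mpr ((Fin.zero_le _).trans_lt htu).ne'
    rw [h, Fin.cycleRange_symm_succ, Fin.cycleRange_symm_succ]
    exact Fin.strictMono_succAbove _ (Fin.succ_lt_succ_iff.mp htu)

lemma sum_unshuffle_one {M : Type} [AddCommMonoid M] {N : ℕ} (F : Equiv.Perm (Fin (N + 1)) → M) :
    ∑ σ ∈ Finset.univ.filter (fun σ : Equiv.Perm (Fin (N + 1)) => IsUnshuffle 1 σ), F σ
      = ∑ m : Fin (N + 1), F (Fin.cycleRange m).symm := by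
  refine Finset.sum_bij' (fun σ _ => σ 0) (fun m _ => (Fin.cycleRange m).symm) ?_ ?_ ?_ ?_ ?_
  · simp
  · intro m _
    simp [isUnshuffle_one_iff]
  · intro σ hσ
    exact ((isUnshuffle_one_iff σ).mp (Finset.mem_filter.mp hσ).2).symm
  · simp
  · intro σ hσ
    exact congrArg F ((isUnshuffle_one_iff σ).mp (Finset.mem_filter.mp hσ).2)

lemma koszulE_cycleRange_symm {N : ℕ} (m : Fin (N + 1)) (d : ℕ → ℤ) :
    koszulE (Fin.cycleRange m).symm d = d m * ∑ t ∈ range m, d t := by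
  have h0 : ∀ t : Fin N, m.succAbove t < m ↔ (t : ℕ) < m := fun t => by
    rw [Fin.succAbove_lt_iff_castSucc_lt]
    rfl
  rw [koszulE_eq_sum, Fin.sum_univ_succ, Fin.sum_univ_succ]
  have hz : ∑ t : Fin N, ∑ u : Fin (N + 1), (if t.succ < u ∧
      (Fin.cycleRange m).symm u < (Fin.cycleRange m).symm t.succ then
        d ((Fin.cycleRange m).symm t.succ) * d ((Fin.cycleRange m).symm u) else 0) = 0 := by
    refine Finset.sum_eq_zero fun t _ => Finset.sum_eq_zero fun u _ => if_neg ?_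
    rintro ⟨h1, h2⟩
    obtain ⟨u, rfl⟩ := Fin.exists_succ_eq.mpr ((Fin.zero_le _).trans_lt h1).ne'
    rw [Fin.cycleRange_symm_succ, Fin.cycleRange_symm_succ] at h2
    exact lt_asymm h2 (Fin.strictMono_succAbove m (Fin.succ_lt_succ_iff.mp h1))
  rw [hz, add_zero, if_neg (by simp), zero_add, Finset.mul_sum]
  simp only [Fin.cycleRange_symm_zero, Fin.cycleRange_symm_succ, Fin.succ_pos, true_and, h0]
  have hm : ∀ t : Fin N, (if (t : ℕ) < m then d m * d (m.succAbove t) else 0)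
      = if (t : ℕ) < m then d m * d t else 0 := fun t => by
    split_ifs with h
    · rw [Fin.succAbove_of_castSucc_lt _ _ h]
      rfl
    · rfl
  simp only [hm]
  rw [← Finset.sum_range (fun t => if t < (m : ℕ) then d m * d t else 0), ← Finset.sum_filter]
  refine Finset.sum_congr ?_ fun _ _ => rfl
  ext t
  simp only [Finset.mem_filter, Finset.mem_range]
  omega

/-- The sequence `c` with `x` inserted at position `p`. -/
def insertSeq {X : Type} (p : ℕ) (x : X) (c : ℕ → X) : ℕ → X := fun u =>
  if u < p then c u else if u = p then x else c (u - 1)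

/-- Moving the first entry of a graded skew-symmetric operation to position `p`. -/
lemma GradedSkewSymm.map_insertSeq {ℬ : ℤ → Submodule 𝕜 V}
    {θ : ∀ n : ℕ, MultilinearMap 𝕜 (fun _ : Fin n => V) V} (hθ : GradedSkewSymm 𝕜 ℬ θ)
    {n : ℕ} {x : V} {dx : ℤ} (hx : x ∈ ℬ dx) {c : ℕ → V} {dc : ℕ → ℤ}
    (hc : ∀ t, c t ∈ ℬ (dc t)) (p : ℕ) (hp : p < n) :
    θ n (fun u => insertSeq p x c u)
      = ((-1 : 𝕜) ^ ((p : ℤ) + dx * ∑ t ∈ range p, dc t)) • θ n (fun u => insertSeq 0 x c u) := by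
  induction p with
  | zero => simp
  | succ p ih =>
    have hmem : ∀ t, insertSeq p x c t ∈ ℬ (insertSeq p dx dc t) := fun t => by
      unfold insertSeq
      split_ifs
      exacts [hc _, hx, hc _]
    have h := hθ n _ _ hmem p hp
    have h1 : insertSeq p x c (p + 1) = c p := by simp [insertSeq]
    have h2 : insertSeq p x c p = x := by simp [insertSeq]
    have h3 : insertSeq p dx dc (p + 1) = dc p := by simp [insertSeq]
    have h4 : insertSeq p dx dc p = dx := by simp [insertSeq]
    have h5 : (fun u : Fin n => if (u : ℕ) = p then insertSeq p x c (p + 1)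
        else if (u : ℕ) = p + 1 then insertSeq p x c p else insertSeq p x c u)
        = fun u : Fin n => insertSeq (p + 1) x c u := by
      rw [h1, h2]
      funext u
      unfold insertSeq
      rcases lt_trichotomy (u : ℕ) p with h | h | h
      · rw [if_neg h.ne, if_neg (by omega), if_pos h, if_pos (by omega)]
      · rw [if_pos h, if_pos (by omega), h]
      · rw [if_neg h.ne', if_neg h.not_gt, if_neg h.ne', if_neg (by omega : ¬(u : ℕ) < p + 1)]
    rw [h5, h3, h4, ih (by omega), smul_smul] at h
    rw [h, Finset.sum_range_succ, mul_add]
    congr 1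
    rw [neg_neg_one_zpow, ← neg_one_zpow_add]
    congr 1
    push_cast
    ring

lemma sum_unshuffle_one_differential {ℬ : ℤ → Submodule 𝕜 V} (dA : V →ₗ[𝕜] V)
    (hd : ∀ (i : ℤ) (v : V), v ∈ ℬ i → dA v ∈ ℬ (i + 1))
    (l θ : ∀ n : ℕ, MultilinearMap 𝕜 (fun _ : Fin n => V) V) (hθ : GradedSkewSymm 𝕜 ℬ θ)
    {n : ℕ} (hn : 1 ≤ n) (d : ℕ → ℤ) (a : ℕ → V) (ha : ∀ t, a t ∈ ℬ (d t)) :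
    ∑ σ ∈ Finset.univ.filter (fun σ : Equiv.Perm (Fin n) => IsUnshuffle 1 σ),
      (((Equiv.Perm.sign σ : ℤ) : 𝕜) * (-1 : 𝕜) ^ (((n : ℤ) - (1 : ℕ)) * (1 + 1)
        + (1 : ℕ) * ((n : ℤ) - (1 : ℕ)) + koszulE σ d)) •
          permComp θ (withDifferential dA l) 1 σ a
      = ((-1 : 𝕜) ^ (n : ℤ)) • ∑ m ∈ range n, ((-1 : 𝕜) ^ (∑ t ∈ range m, d t)) •
          θ n (fun u => if (u : ℕ) = m then dA (a m) else a u) := by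
  obtain ⟨N, rfl⟩ := Nat.exists_eq_add_of_le' hn
  rw [sum_unshuffle_one, Finset.sum_range, Finset.smul_sum]
  refine Finset.sum_congr rfl fun m _ => ?_
  rw [koszulE_cycleRange_symm, Equiv.Perm.sign_symm, Fin.sign_cycleRange]
  set c : ℕ → V := fun t => if t < (m : ℕ) then a t else a (t + 1) with hcdef
  set dc : ℕ → ℤ := fun t => if t < (m : ℕ) then d t else d (t + 1) with hdcdef
  have hc : ∀ t, c t ∈ ℬ (dc t) := fun t => by
    simp only [hcdef, hdcdef]
    split_ifs
    exacts [ha _, ha _]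
  have h := hθ.map_insertSeq (n := N + 1) (hd _ _ (ha m)) hc m m.isLt
  have hl : (fun u : Fin (N + 1) => insertSeq (m : ℕ) (dA (a m)) c u)
      = fun u : Fin (N + 1) => if (u : ℕ) = m then dA (a m) else a u := by
    funext u
    unfold insertSeq
    rcases lt_trichotomy (u : ℕ) m with h | h | h
    · simp [hcdef, h, h.ne]
    · simp [h]
    · rw [if_neg h.not_gt, if_neg h.ne', if_neg h.ne', hcdef]
      simp only
      rw [if_neg (by omega), Nat.sub_add_cancel (by omega)]
  have hsum : ∑ t ∈ range m, dc t = ∑ t ∈ range m, d t :=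
    Finset.sum_congr rfl fun t ht => if_pos (Finset.mem_range.mp ht)
  have hcomp : permComp θ (withDifferential dA l) 1 (Fin.cycleRange m).symm a
      = -θ (N + 1) (fun u => insertSeq 0 (dA (a m)) c u) := by
    rw [permComp, Nat.add_sub_cancel, withDifferential_one]
    have hx : permV (Fin.cycleRange m).symm a ((0 : Fin 1) : ℕ) = a m := by
      simp [permV]
    rw [hx, ← neg_one_smul 𝕜 (dA (a m)), map_smul_head N (θ (N + 1)) _ _
      (fun t => permV (Fin.cycleRange m).symm a (1 + t - 1)), neg_one_smul]
    congr 2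
    funext u
    refine Fin.cases ?_ (fun u => ?_) u
    · simp [insertSeq]
    · have hu : 1 + ((u.succ : Fin (N + 1)) : ℕ) - 1 = (u.succ : Fin (N + 1)) := by omega
      rw [hu]
      simp only [Fin.val_succ, Nat.add_eq_zero_iff, one_ne_zero, and_false, if_false, insertSeq,
        not_lt_zero, Nat.add_sub_cancel]
      have hs : permV (Fin.cycleRange m).symm a ((u : ℕ) + 1) = a (m.succAbove u) := by
        rw [permV, dif_pos (by omega)]
        exact congrArg (fun w : Fin (N + 1) => a w) (Fin.cycleRange_symm_succ m u)
      rw [hs, hcdef]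
      simp only
      split_ifs with hlt
      · rw [Fin.succAbove_of_castSucc_lt _ _ hlt]
        rfl
      · rw [Fin.succAbove_of_le_castSucc _ _ (not_lt.mp hlt)]
        rfl
  rw [hcomp, ← hl, h, hsum, smul_smul, smul_smul, smul_neg, ← neg_smul]
  congr 1
  push_cast
  rw [← zpow_natCast (-1 : 𝕜) (m : ℕ)]
  simp only [← neg_one_zpow_add, neg_neg_one_zpow]
  apply neg_one_zpow_congr
  refine ⟨(N : ℤ) - ∑ t ∈ range m, d t, ?_⟩
  ring

/-- The suspended derivation defect is the unsuspended one up to a global sign. -/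
lemma suspended_defect_eq {ℬ : ℤ → Submodule 𝕜 V} (k : ℤ) (dA : V →ₗ[𝕜] V)
    (hd : ∀ (i : ℤ) (v : V), v ∈ ℬ i → dA v ∈ ℬ (i + 1))
    (l θ : ∀ n : ℕ, MultilinearMap 𝕜 (fun _ : Fin n => V) V) (hθ : GradedSkewSymm 𝕜 ℬ θ)
    {n : ℕ} (hn : 1 ≤ n) (e : ℕ → ℤ) (v : ℕ → V) (hv : ∀ t, v t ∈ ℬ (e t + 1)) :
    ∑ j ∈ Icc 1 n,
      ∑ σ ∈ Finset.univ.filter (fun σ : Equiv.Perm (Fin n) => IsUnshuffle j σ),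
        ( ((-1 : 𝕜) ^ koszulE σ e) •
            susTVal 𝕜 θ (n - j + 1)
              (fun t => if t = 0 then 1 + ∑ w ∈ range j, permD σ e w
                else permD σ e (j + t - 1))
              (fun t => if t = 0 then susLVal 𝕜 dA l j (permD σ e) (permV σ v)
                else permV σ v (j + t - 1))
          - ((-1 : 𝕜) ^ (k + koszulE σ e)) •
            susLVal 𝕜 dA l (n - j + 1)
              (fun t => if t = 0 then k + ∑ w ∈ range j, permD σ e w
                else permD σ e (j + t - 1))
              (fun t => if t = 0 then susTVal 𝕜 θ j (permD σ e) (permV σ v)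
                else permV σ v (j + t - 1)) )
    = ((-1 : 𝕜) ^ (((n * (n - 1) / 2 : ℕ) : ℤ) + susExp n e + k)) •
      (dA (θ n fun u => v (u : ℕ))
        - ((-1 : 𝕜) ^ (k - (n : ℤ) + 1)) •
            ∑ m ∈ range n, ((-1 : 𝕜) ^ (∑ t ∈ range m, (e t + 1))) •
              θ n (fun u => if (u : ℕ) = m then dA (v m) else v (u : ℕ))
        + ((∑ j ∈ Icc 2 n,
            ∑ σ ∈ Finset.univ.filter (fun σ : Equiv.Perm (Fin n) => IsUnshuffle j σ),
              (((Equiv.Perm.sign σ : ℤ) : 𝕜) *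
                  ((-1 : 𝕜) ^ (k + (j : ℤ) * ((n : ℤ) - (j : ℤ))
                    + koszulE σ (fun t => e t + 1)))) • permComp θ l j σ v)
        + ∑ j ∈ Icc 1 (n - 1),
            ∑ σ ∈ Finset.univ.filter (fun σ : Equiv.Perm (Fin n) => IsUnshuffle j σ),
              (((Equiv.Perm.sign σ : ℤ) : 𝕜) *
                  ((-1 : 𝕜) ^ (k + (j : ℤ) * ((n : ℤ) - (j : ℤ))
                    + (k + 1) * ((n : ℤ) + 1 - (j : ℤ)) + koszulE σ (fun t => e t + 1)))) •
                permComp l θ j σ v)) := by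
  set l' := withDifferential dA l with hl'
  have hterm : ∀ j ∈ Icc 1 n, ∀ σ : Equiv.Perm (Fin n),
      ((-1 : 𝕜) ^ koszulE σ e) •
            susTVal 𝕜 θ (n - j + 1)
              (fun t => if t = 0 then 1 + ∑ w ∈ range j, permD σ e w
                else permD σ e (j + t - 1))
              (fun t => if t = 0 then susLVal 𝕜 dA l j (permD σ e) (permV σ v)
                else permV σ v (j + t - 1))
          - ((-1 : 𝕜) ^ (k + koszulE σ e)) •
            susLVal 𝕜 dA l (n - j + 1)
              (fun t => if t = 0 then k + ∑ w ∈ range j, permD σ e w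
                else permD σ e (j + t - 1))
              (fun t => if t = 0 then susTVal 𝕜 θ j (permD σ e) (permV σ v)
                else permV σ v (j + t - 1))
        = ((-1 : 𝕜) ^ (((n * (n - 1) / 2 : ℕ) : ℤ) + susExp n e)) •
          ((((Equiv.Perm.sign σ : ℤ) : 𝕜) * (-1 : 𝕜) ^ (((n : ℤ) - j) * (1 + 1)
            + j * ((n : ℤ) - j) + koszulE σ (fun t => e t + 1))) • permComp θ l' j σ v
          - (-1 : 𝕜) ^ k • (((Equiv.Perm.sign σ : ℤ) : 𝕜) * (-1 : 𝕜) ^ (((n : ℤ) - j) * (k + 1)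
            + j * ((n : ℤ) - j) + koszulE σ (fun t => e t + 1))) • permComp l' θ j σ v) := by
    intro j hj σ
    simp only [susLVal_eq_susTVal]
    rw [susTVal_comp _ _ (Finset.mem_Icc.mp hj).2, neg_one_zpow_add k, mul_smul ((-1 : 𝕜) ^ k),
      susTVal_comp _ _ (Finset.mem_Icc.mp hj).2, smul_sub,
      smul_comm ((-1 : 𝕜) ^ k) ((-1 : 𝕜) ^ (((n * (n - 1) / 2 : ℕ) : ℤ) + susExp n e))]
  rw [Finset.sum_congr rfl fun j hj => Finset.sum_congr rfl fun σ _ => hterm j hj σ]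
  simp only [← Finset.smul_sum, Finset.sum_sub_distrib]
  have hfirst : Icc 1 n = insert 1 (Icc 2 n) := by
    ext j
    simp only [Finset.mem_Icc, Finset.mem_insert]
    omega
  have hlast : Icc 1 n = insert n (Icc 1 (n - 1)) := by
    ext j
    simp only [Finset.mem_Icc, Finset.mem_insert]
    omega
  have hone := sum_unshuffle_one_differential dA hd l θ hθ hn (fun t => e t + 1) v hv
  have hself := sum_unshuffle_self dA l θ n (fun t => e t + 1) v (k + 1)
  rw [neg_one_zpow_add _ k, mul_smul]
  congr 1
  nth_rewrite 1 [hfirst]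
  rw [hlast, Finset.sum_insert (by simp), Finset.sum_insert (by simp; omega), hone, hself]
  have hθl : (-1 : 𝕜) ^ k • (∑ j ∈ Icc 2 n,
      ∑ σ ∈ Finset.univ.filter (fun σ : Equiv.Perm (Fin n) => IsUnshuffle j σ),
        (((Equiv.Perm.sign σ : ℤ) : 𝕜) * ((-1 : 𝕜) ^ (k + (j : ℤ) * ((n : ℤ) - (j : ℤ))
          + koszulE σ (fun t => e t + 1)))) • permComp θ l j σ v)
      = ∑ j ∈ Icc 2 n,
        ∑ σ ∈ Finset.univ.filter (fun σ : Equiv.Perm (Fin n) => IsUnshuffle j σ),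
          (((Equiv.Perm.sign σ : ℤ) : 𝕜) * (-1 : 𝕜) ^ (((n : ℤ) - j) * (1 + 1)
            + j * ((n : ℤ) - j) + koszulE σ (fun t => e t + 1))) • permComp θ l' j σ v := by
    simp only [Finset.smul_sum]
    refine Finset.sum_congr rfl fun j hj => Finset.sum_congr rfl fun σ _ => ?_
    have hj1 : j ≠ 1 := by
      have := (Finset.mem_Icc.mp hj).1
      omega
    rw [smul_smul, permComp, permComp, hl', withDifferential_of_ne dA l hj1, mul_left_comm,
      ← neg_one_zpow_add]
    congr 2
    apply neg_one_zpow_congr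
    exact ⟨k - (n - j), by ring⟩
  have hlθ : (-1 : 𝕜) ^ k • (∑ j ∈ Icc 1 (n - 1),
      ∑ σ ∈ Finset.univ.filter (fun σ : Equiv.Perm (Fin n) => IsUnshuffle j σ),
        (((Equiv.Perm.sign σ : ℤ) : 𝕜) * ((-1 : 𝕜) ^ (k + (j : ℤ) * ((n : ℤ) - (j : ℤ))
          + (k + 1) * ((n : ℤ) + 1 - (j : ℤ)) + koszulE σ (fun t => e t + 1)))) •
            permComp l θ j σ v)
      = -((-1 : 𝕜) ^ k • ∑ j ∈ Icc 1 (n - 1),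
        ∑ σ ∈ Finset.univ.filter (fun σ : Equiv.Perm (Fin n) => IsUnshuffle j σ),
          (((Equiv.Perm.sign σ : ℤ) : 𝕜) * (-1 : 𝕜) ^ (((n : ℤ) - j) * (k + 1)
            + j * ((n : ℤ) - j) + koszulE σ (fun t => e t + 1))) • permComp l' θ j σ v) := by
    rw [← smul_neg]
    congr 1
    simp only [← Finset.sum_neg_distrib]
    refine Finset.sum_congr rfl fun j hj => Finset.sum_congr rfl fun σ _ => ?_
    have hj1 : n + 1 - j ≠ 1 := by
      have := Finset.mem_Icc.mp hj
      omega
    rw [permComp, permComp, hl', withDifferential_of_ne dA l hj1, ← neg_smul, ← mul_neg]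
    congr 2
    rw [neg_neg_one_zpow]
    apply neg_one_zpow_congr
    exact ⟨k, by ring⟩
  rw [smul_add _ (-dA _), smul_add, smul_sub, smul_add, hθl, hlθ,
    smul_smul ((-1 : 𝕜) ^ k), smul_neg]
  have hsign : (-1 : 𝕜) ^ k * (-1 : 𝕜) ^ (k - (n : ℤ) + 1) = -(-1 : 𝕜) ^ (n : ℤ) := by
    rw [← neg_one_zpow_add, neg_neg_one_zpow]
    apply neg_one_zpow_congr
    exact ⟨k - n, by ring⟩
  rw [hsign, neg_smul]
  abel

end Compositions

end Stmt7

open Stmt7 in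
/-- Let `(A,d)` be a ℤ-graded vector space over a field of
characteristic `0` with a degree `+1` differential, `{l_n}` graded skew-symmetric maps of
degree `2 − n` satisfying the unsuspended `L_∞` relations, `k ∈ ℤ`, and `{θ_n}` graded
skew-symmetric maps of degree `k − n + 1`.  Then the `θ_n` satisfy the unsuspended
derivation relations iff the suspended maps `Θ_n` are a strong homotopy derivation of
degree `k` of the `L_∞` algebra `(V = ↓A, {L_n})` — and conversely. -/
theorem statement7 {𝕜 V : Type} [Field 𝕜] [CharZero 𝕜] [AddCommGroup V] [Module 𝕜 V]
    (ℬ : ℤ → Submodule 𝕜 V) (hgr : DirectSum.IsInternal ℬ) (k : ℤ)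
    (dA : V →ₗ[𝕜] V) (hd : ∀ (i : ℤ) (v : V), v ∈ ℬ i → dA v ∈ ℬ (i + 1))
    (hdd : ∀ v, dA (dA v) = 0)
    (l θ : ∀ n : ℕ, MultilinearMap 𝕜 (fun _ : Fin n => V) V)
    (hldeg : ∀ n : ℕ, 2 ≤ n → ∀ (d : Fin n → ℤ) (a : Fin n → V), (∀ j, a j ∈ ℬ (d j)) →
        l n a ∈ ℬ ((2 - (n : ℤ)) + ∑ j, d j))
    (hlskew : GradedSkewSymm 𝕜 ℬ l)
    (hlrel : UnsuspLRel 𝕜 ℬ dA l)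
    (hθdeg : ∀ n : ℕ, 1 ≤ n → ∀ (d : Fin n → ℤ) (a : Fin n → V), (∀ j, a j ∈ ℬ (d j)) →
        θ n a ∈ ℬ ((k - (n : ℤ) + 1) + ∑ j, d j))
    (hθskew : GradedSkewSymm 𝕜 ℬ θ) :
    UnsuspLDer 𝕜 ℬ k dA l θ ↔ SusLSHDer 𝕜 ℬ k dA l θ := by
  have key {n : ℕ} (hn : 1 ≤ n) (e : ℕ → ℤ) (v : ℕ → V) (hv : ∀ t, v t ∈ ℬ (e t + 1)) :=
    suspended_defect_eq k dA hd l θ hθskew hn e v hv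
  constructor
  · intro h n hn e v hv
    have hrel := h n hn (fun t => e t + 1) v hv
    rw [key hn e v hv]
    refine smul_eq_zero_of_right _ ?_
    rw [hrel]
    exact neg_add_cancel _
  · intro h n hn d a ha
    obtain ⟨e, rfl⟩ : ∃ e : ℕ → ℤ, d = fun t => e t + 1 :=
      ⟨fun t => d t - 1, funext fun t => (sub_add_cancel _ _).symm⟩
    have hrel := h n hn e a ha
    rw [key hn e a ha] at hrel
    have hne : (-1 : 𝕜) ^ (((n * (n - 1) / 2 : ℕ) : ℤ) + susExp n e + k) ≠ 0 :=
      zpow_ne_zero _ (neg_ne_zero.mpr one_ne_zero)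
    exact eq_neg_of_add_eq_zero_left ((smul_eq_zero.mp hrel).resolve_left hne)
end

section
/- Let (V,{l_n}) be an L_∞ algebra over a field of characteristic 0 and let a ∈ V be homogeneous of degree k with l_1(a) = 0. Then the maps θ_n : V^{⊗n} → V defined by θ_n(v_1,…,v_n) := l_{n+1}(a, v_1,…,v_n) form a strong homotopy derivation of degree k+1 of (V,{l_n}). -/
/-!
STATEMENT 10.  Strong homotopy inner derivations of `L_∞` algebras.

A ℤ-graded vector space is a vector space `V` with an internal grading
`ℬ : ℤ → Submodule 𝕜 V`.  An `L_∞` algebra structure is a family of graded symmetric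
multilinear maps `l_n` of degree `+1` satisfying the higher Jacobi relations on
homogeneous elements; unshuffles and Koszul signs are as usual.
-/

open Finset

namespace Stmt10

variable {𝕜 V : Type} [Field 𝕜] [AddCommGroup V] [Module 𝕜 V]

/-- `σ` is a `(j, n−j)`-unshuffle: strictly monotone on the first `j` and on the last
`n − j` positions. -/
def IsUnshuffle {n : ℕ} (j : ℕ) (σ : Equiv.Perm (Fin n)) : Prop :=
  ∀ t u : Fin n, t < u → ((u : ℕ) < j ∨ j ≤ (t : ℕ)) → σ t < σ u

instance {n : ℕ} (j : ℕ) (σ : Equiv.Perm (Fin n)) : Decidable (IsUnshuffle j σ) := by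
  unfold IsUnshuffle; infer_instance

/-- Exponent of the Koszul sign of `σ` acting on homogeneous elements of degrees `d`:
`(−1)^{e(σ)} = ∏_{t<u, σ(t)>σ(u)} (−1)^{d_{σ(t)} d_{σ(u)}}`. -/
def koszulE {n : ℕ} (σ : Equiv.Perm (Fin n)) (d : ℕ → ℤ) : ℤ :=
  ∑ p ∈ Finset.univ.filter
      (fun p : Fin n × Fin n => p.1 < p.2 ∧ σ p.2 < σ p.1), d (σ p.1) * d (σ p.2)

/-- The permuted tuple `t ↦ v (σ t)`. -/
def permV {n : ℕ} (σ : Equiv.Perm (Fin n)) (v : ℕ → V) : ℕ → V := fun t =>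
  if h : t < n then v (σ ⟨t, h⟩) else 0

variable (𝕜)

/-- Graded symmetry of the operations on homogeneous elements (adjacent transpositions). -/
def GradedSymm (ℬ : ℤ → Submodule 𝕜 V)
    (l : ∀ n : ℕ, MultilinearMap 𝕜 (fun _ : Fin n => V) V) : Prop :=
  ∀ (n : ℕ) (d : ℕ → ℤ) (v : ℕ → V), (∀ t, v t ∈ ℬ (d t)) → ∀ t, t + 1 < n →
    l n (fun u => if (u : ℕ) = t then v (t + 1) else if (u : ℕ) = t + 1 then v t
          else v (u : ℕ))
      = ((-1 : 𝕜) ^ (d t * d (t + 1))) • l n (fun u => v (u : ℕ))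

/-- The higher Jacobi relations:  for every `n ≥ 1` and homogeneous `v` of degrees `d`,
`Σ_{j=1}^n Σ_{σ ∈ USh(j,n−j)} (−1)^{e(σ)} l_{n−j+1}(l_j(v_{σ(1)},…,v_{σ(j)}),…,v_{σ(n)}) = 0`. -/
def LInftyRel (ℬ : ℤ → Submodule 𝕜 V)
    (l : ∀ n : ℕ, MultilinearMap 𝕜 (fun _ : Fin n => V) V) : Prop :=
  ∀ n : ℕ, 1 ≤ n → ∀ (d : ℕ → ℤ) (v : ℕ → V), (∀ t, v t ∈ ℬ (d t)) →
    ∑ j ∈ Icc 1 n,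
      ∑ σ ∈ Finset.univ.filter (fun σ : Equiv.Perm (Fin n) => IsUnshuffle j σ),
        ((-1 : 𝕜) ^ koszulE σ d) •
          l (n - j + 1) (fun u => if (u : ℕ) = 0 then l j (fun w => permV σ v (w : ℕ))
            else permV σ v (j + (u : ℕ) - 1)) = 0

end Stmt10

namespace Stmt10

/-- The permutation of `Fin (n + 1)` sending `p` to `0` and acting as `τ` elsewhere. -/
def insertZero {n : ℕ} (p : Fin (n + 1)) (τ : Equiv.Perm (Fin n)) : Equiv.Perm (Fin (n + 1)) :=
  (finSuccEquiv' p).trans ((Equiv.optionCongr τ).trans (finSuccEquiv' 0).symm)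

@[simp]
theorem insertZero_self {n : ℕ} (p : Fin (n + 1)) (τ : Equiv.Perm (Fin n)) :
    insertZero p τ p = 0 := by
  simp [insertZero]

@[simp]
theorem insertZero_succAbove {n : ℕ} (p : Fin (n + 1)) (τ : Equiv.Perm (Fin n)) (t : Fin n) :
    insertZero p τ (p.succAbove t) = (τ t).succ := by
  simp [insertZero]

theorem insertZero_injective {n : ℕ} (p : Fin (n + 1)) :
    Function.Injective (insertZero p) := by
  intro τ τ' h
  ext1 t
  have := congrArg (fun σ => σ (p.succAbove t)) h
  simpa using this

theorem exists_insertZero_eq {n : ℕ} {p : Fin (n + 1)} {σ : Equiv.Perm (Fin (n + 1))}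
    (h : σ p = 0) : ∃ τ, insertZero p τ = σ := by
  let e : Option (Fin n) ≃ Option (Fin n) :=
    (finSuccEquiv' p).symm.trans (σ.trans (finSuccEquiv' 0))
  have he : e none = none := by simp [e, h]
  refine ⟨Equiv.removeNone e, ?_⟩
  ext1 x
  rcases Fin.eq_self_or_eq_succAbove p x with rfl | ⟨t, rfl⟩
  · simp [h]
  · have hne : σ (p.succAbove t) ≠ 0 := by
      rw [← h]
      exact fun hh => Fin.succAbove_ne p t (σ.injective hh)
    obtain ⟨y, hy⟩ := Fin.exists_succ_eq.mpr hne
    have hs : e (some t) = some y := by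
      simp [e, ← hy]
    have h1 : some (Equiv.removeNone e t) = e (some t) := Equiv.removeNone_some e ⟨y, hs⟩
    rw [hs] at h1
    rw [insertZero_succAbove, Option.some.inj h1, hy]

theorem sum_filter_eq_sum_insertZero {n : ℕ} {M : Type*} [AddCommMonoid M] (p : Fin (n + 1))
    (P : Equiv.Perm (Fin (n + 1)) → Prop) [DecidablePred P]
    (F : Equiv.Perm (Fin (n + 1)) → M) :
    ∑ σ with P σ ∧ σ p = 0, F σ = ∑ τ with P (insertZero p τ), F (insertZero p τ) := by
  symm
  refine Finset.sum_bij (fun τ _ => insertZero p τ) ?_ ?_ ?_ ?_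
  · intro τ hτ
    simpa using hτ
  · intro τ _ τ' _ h
    exact insertZero_injective p h
  · intro σ hσ
    simp only [Finset.mem_filter, Finset.mem_univ, true_and] at hσ
    obtain ⟨τ, rfl⟩ := exists_insertZero_eq hσ.2
    exact ⟨τ, by simpa using hσ.1, rfl⟩
  · intro _ _
    rfl

theorem isUnshuffle_insertZero_zero {n : ℕ} (j : ℕ) (τ : Equiv.Perm (Fin n)) :
    IsUnshuffle (j + 1) (insertZero 0 τ) ↔ IsUnshuffle j τ := by
  constructor
  · intro h t u htu hj
    have := h (Fin.succAbove 0 t) (Fin.succAbove 0 u) (by simpa using htu) (by simpa using hj)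
    simpa only [insertZero_succAbove, Fin.succ_lt_succ_iff] using this
  · intro h t u htu hj
    rcases Fin.eq_self_or_eq_succAbove 0 u with rfl | ⟨u, rfl⟩
    · exact absurd htu (Fin.not_lt_zero t)
    rcases Fin.eq_self_or_eq_succAbove 0 t with rfl | ⟨t, rfl⟩
    · simp only [insertZero_succAbove, insertZero_self, Fin.succ_pos]
    · simp only [insertZero_succAbove, Fin.succ_lt_succ_iff]
      exact h t u (by simpa using htu) (by simpa using hj)

theorem val_succAbove {n : ℕ} (p : Fin (n + 1)) (t : Fin n) :
    (p.succAbove t : ℕ) = if (t : ℕ) < p then (t : ℕ) else t + 1 := by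
  simp only [Fin.succAbove, Fin.lt_def, Fin.val_castSucc]
  split_ifs <;> simp

theorem isUnshuffle_insertZero {n : ℕ} (p : Fin (n + 1)) (τ : Equiv.Perm (Fin n)) :
    IsUnshuffle p (insertZero p τ) ↔ IsUnshuffle p τ := by
  constructor
  · intro h t u htu hj
    have := h (p.succAbove t) (p.succAbove u) (by simpa using htu) (by
      rw [val_succAbove, val_succAbove]
      split_ifs <;> omega)
    simpa only [insertZero_succAbove, Fin.succ_lt_succ_iff] using this
  · intro h t u htu hj
    rcases Fin.eq_self_or_eq_succAbove p u with rfl | ⟨u, rfl⟩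
    · rw [Fin.lt_def] at htu
      omega
    rcases Fin.eq_self_or_eq_succAbove p t with rfl | ⟨t, rfl⟩
    · simp only [insertZero_succAbove, insertZero_self, Fin.succ_pos]
    · simp only [insertZero_succAbove, Fin.succ_lt_succ_iff]
      refine h t u (by simpa using htu) ?_
      rw [val_succAbove, val_succAbove] at hj
      split_ifs at hj <;> omega

/-- In a `(j, n + 1 - j)`-unshuffle, the value `0` is attained at the start of one of
the two blocks. -/
theorem IsUnshuffle.apply_eq_zero {n j : ℕ} {σ : Equiv.Perm (Fin (n + 1))} (h : IsUnshuffle j σ)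
    (h0 : σ 0 ≠ 0) : ∃ hj : j < n + 1, σ ⟨j, hj⟩ = 0 := by
  obtain ⟨q, hq⟩ := σ.surjective 0
  have hq0 : 0 < q := Fin.pos_of_ne_zero (by rintro rfl; exact h0 hq)
  have hjq : j ≤ q := by
    by_contra hlt
    have := h 0 q hq0 (Or.inl (by omega))
    simp [hq] at this
  have hjn : j < n + 1 := by omega
  refine ⟨hjn, ?_⟩
  rcases hjq.eq_or_lt with heq | hlt
  · have : (⟨j, hjn⟩ : Fin (n + 1)) = q := Fin.ext heq
    rw [this, hq]
  · have := h ⟨j, hjn⟩ q hlt (Or.inr le_rfl)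
    simp [hq] at this

theorem sum_isUnshuffle_of_le {n j : ℕ} {M : Type*} [AddCommMonoid M] (p : Fin (n + 1))
    (hp : (p : ℕ) = j + 1) (F : Equiv.Perm (Fin (n + 1)) → M) :
    ∑ σ with IsUnshuffle (j + 1) σ, F σ
      = ∑ τ : Equiv.Perm (Fin n) with IsUnshuffle j τ, F (insertZero 0 τ)
        + ∑ τ : Equiv.Perm (Fin n) with IsUnshuffle (j + 1) τ, F (insertZero p τ) := by
  rw [← Finset.sum_filter_add_sum_filter_not _ (fun σ : Equiv.Perm (Fin (n + 1)) => σ 0 = 0),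
    Finset.filter_filter, Finset.filter_filter, sum_filter_eq_sum_insertZero]
  simp only [isUnshuffle_insertZero_zero]
  congr 1
  have hfilter : (Finset.univ.filter fun σ : Equiv.Perm (Fin (n + 1)) =>
      IsUnshuffle (j + 1) σ ∧ ¬ σ 0 = 0)
      = Finset.univ.filter fun σ => IsUnshuffle (j + 1) σ ∧ σ p = 0 := by
    refine Finset.filter_congr fun σ _ => and_congr_right fun h => ⟨fun h0 => ?_, fun hσ h0 => ?_⟩
    · obtain ⟨hj, hz⟩ := h.apply_eq_zero h0
      rwa [show p = ⟨j + 1, hj⟩ from Fin.ext hp]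
    · have := σ.injective (h0.trans hσ.symm)
      rw [← this] at hp
      simp at hp
  rw [hfilter, sum_filter_eq_sum_insertZero, ← hp]
  simp only [isUnshuffle_insertZero]

theorem sum_isUnshuffle_top {n : ℕ} {M : Type*} [AddCommMonoid M]
    (F : Equiv.Perm (Fin (n + 1)) → M) :
    ∑ σ with IsUnshuffle (n + 1) σ, F σ
      = ∑ τ : Equiv.Perm (Fin n) with IsUnshuffle n τ, F (insertZero 0 τ) := by
  have hfilter : (Finset.univ.filter fun σ : Equiv.Perm (Fin (n + 1)) => IsUnshuffle (n + 1) σ)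
      = Finset.univ.filter fun σ => IsUnshuffle (n + 1) σ ∧ σ 0 = 0 := by
    refine Finset.filter_congr fun σ _ => ⟨fun h => ⟨h, ?_⟩, fun h => h.1⟩
    by_contra h0
    obtain ⟨hj, -⟩ := h.apply_eq_zero h0
    exact lt_irrefl _ hj
  rw [hfilter, sum_filter_eq_sum_insertZero]
  simp only [isUnshuffle_insertZero_zero]

/-- The sequence `x, f 0, f 1, …`. -/
def consSeq {α : Type*} (x : α) (f : ℕ → α) (t : ℕ) : α := if t = 0 then x else f (t - 1)

@[simp]
theorem consSeq_zero {α : Type*} (x : α) (f : ℕ → α) : consSeq x f 0 = x := rfl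

@[simp]
theorem consSeq_succ {α : Type*} (x : α) (f : ℕ → α) (t : ℕ) : consSeq x f (t + 1) = f t := rfl

theorem koszulE_eq_sum {n : ℕ} (σ : Equiv.Perm (Fin n)) (d : ℕ → ℤ) :
    koszulE σ d = ∑ x, ∑ y, if x < y ∧ σ y < σ x then d (σ x) * d (σ y) else 0 := by
  rw [koszulE, Finset.sum_filter, Fintype.sum_prod_type]

theorem koszulE_insertZero {n : ℕ} (p : Fin (n + 1)) (τ : Equiv.Perm (Fin n)) (k : ℤ)
    (d : ℕ → ℤ) :
    koszulE (insertZero p τ) (consSeq k d)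
      = koszulE τ d + k * ∑ t : Fin n, if (t : ℕ) < p then d (τ t) else 0 := by
  rw [koszulE_eq_sum, koszulE_eq_sum, Fin.sum_univ_succAbove _ p]
  simp only [Fin.sum_univ_succAbove _ p, insertZero_self, insertZero_succAbove, Fin.not_lt_zero,
    and_false, if_false, Finset.sum_const_zero, zero_add, Fin.succ_pos, and_true, Fin.val_succ,
    Fin.val_zero, consSeq_zero, consSeq_succ, Fin.succ_lt_succ_iff, Fin.succAbove_lt_succAbove_iff,
    Finset.sum_add_distrib, Fin.succAbove_lt_iff_castSucc_lt]
  rw [add_comm, Finset.mul_sum]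
  congr 1
  refine Finset.sum_congr rfl fun t _ => ?_
  simp only [Fin.lt_def, Fin.val_castSucc]
  split_ifs <;> ring

section

variable {𝕜 V : Type} [Field 𝕜] [AddCommGroup V] [Module 𝕜 V]

theorem permV_insertZero_of_lt {n : ℕ} (p : Fin (n + 1)) (τ : Equiv.Perm (Fin n)) (a : V)
    (v : ℕ → V) {i : ℕ} (hi : i < p) :
    permV (insertZero p τ) (consSeq a v) i = permV τ v i := by
  have hn : i < n := by omega
  have hs : (⟨i, by omega⟩ : Fin (n + 1)) = p.succAbove ⟨i, hn⟩ := by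
    ext; rw [val_succAbove]; simp [hi]
  simp only [permV, dif_pos hn, dif_pos (show i < n + 1 by omega), hs, insertZero_succAbove,
    Fin.val_succ, consSeq_succ]

theorem permV_insertZero_self {n : ℕ} (p : Fin (n + 1)) (τ : Equiv.Perm (Fin n)) (a : V)
    (v : ℕ → V) : permV (insertZero p τ) (consSeq a v) p = a := by
  simp only [permV, dif_pos p.2, Fin.eta, insertZero_self, Fin.val_zero, consSeq_zero]

theorem permV_insertZero_succ {n : ℕ} (p : Fin (n + 1)) (τ : Equiv.Perm (Fin n)) (a : V)
    (v : ℕ → V) {i : ℕ} (hi : (p : ℕ) ≤ i) :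
    permV (insertZero p τ) (consSeq a v) (i + 1) = permV τ v i := by
  by_cases hn : i < n
  · have hs : (⟨i + 1, by omega⟩ : Fin (n + 1)) = p.succAbove ⟨i, hn⟩ := by
      ext; rw [val_succAbove]; simp [hi]
    simp only [permV, dif_pos hn, dif_pos (show i + 1 < n + 1 by omega), hs, insertZero_succAbove,
      Fin.val_succ, consSeq_succ]
  · simp [permV, hn]

theorem multilinear_congr (l : ∀ n : ℕ, MultilinearMap 𝕜 (fun _ : Fin n => V) V) {m m' : ℕ}
    (h : m = m') {f : Fin m → V} {g : Fin m' → V}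
    (hfg : ∀ i (hi : i < m) (hi' : i < m'), f ⟨i, hi⟩ = g ⟨i, hi'⟩) : l m f = l m' g := by
  subst h
  congr 1
  funext u
  exact hfg u u.2 u.2

/-- The summand of the higher Jacobi relation attached to `j` and `σ`. -/
def jacobiTerm (l : ∀ n : ℕ, MultilinearMap 𝕜 (fun _ : Fin n => V) V) (n j : ℕ) (d : ℕ → ℤ)
    (v : ℕ → V) (σ : Equiv.Perm (Fin n)) : V :=
  ((-1 : 𝕜) ^ koszulE σ d) •
    l (n - j + 1) (fun u => if (u : ℕ) = 0 then l j (fun w => permV σ v (w : ℕ))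
      else permV σ v (j + (u : ℕ) - 1))

theorem jacobiTerm_insertZero_zero (l : ∀ n : ℕ, MultilinearMap 𝕜 (fun _ : Fin n => V) V)
    (n j : ℕ) (k : ℤ) (a : V) (d : ℕ → ℤ) (v : ℕ → V) (τ : Equiv.Perm (Fin n)) :
    jacobiTerm l (n + 1) (j + 1) (consSeq k d) (consSeq a v) (insertZero 0 τ)
      = ((-1 : 𝕜) ^ koszulE τ d) •
          l (n - j + 1) (fun u => if (u : ℕ) = 0 then
              l (j + 1) (fun w => if (w : ℕ) = 0 then a else permV τ v ((w : ℕ) - 1))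
            else permV τ v (j + (u : ℕ) - 1)) := by
  have hE : koszulE (insertZero 0 τ) (consSeq k d) = koszulE τ d := by
    rw [koszulE_insertZero]; simp
  have hperm : ∀ i, permV (insertZero 0 τ) (consSeq a v) (i + 1) = permV τ v i :=
    fun i => permV_insertZero_succ 0 τ a v (by simp)
  rw [jacobiTerm, hE]
  congr 1
  refine multilinear_congr l (by omega) fun i _ _ => ?_
  rcases i with _ | i
  · simp only [if_true]
    congr 1
    funext w
    rcases w with ⟨_ | w, hw⟩
    · simpa using permV_insertZero_self 0 τ a v
    · simpa using hperm w
  · simp only [Nat.add_eq_zero_iff, one_ne_zero, and_false, if_false]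
    rw [← hperm]
    congr 1
    omega

theorem permV_mem {ℬ : ℤ → Submodule 𝕜 V} {n : ℕ} (σ : Equiv.Perm (Fin n)) {d : ℕ → ℤ}
    {v : ℕ → V} (hv : ∀ t, v t ∈ ℬ (d t)) (t : ℕ) :
    permV σ v t ∈ ℬ (if h : t < n then d (σ ⟨t, h⟩) else 0) := by
  rw [permV]
  split_ifs
  · exact hv _
  · exact zero_mem _

theorem jacobiTerm_insertZero {ℬ : ℤ → Submodule 𝕜 V}
    {l : ∀ n : ℕ, MultilinearMap 𝕜 (fun _ : Fin n => V) V}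
    (hldeg : ∀ n : ℕ, 1 ≤ n → ∀ (d : Fin n → ℤ) (v : Fin n → V), (∀ j, v j ∈ ℬ (d j)) →
        l n v ∈ ℬ (1 + ∑ j, d j))
    (hlsym : GradedSymm 𝕜 ℬ l) {n j : ℕ} (hj : 1 ≤ j) (p : Fin (n + 1)) (hp : (p : ℕ) = j)
    {k : ℤ} {a : V} (ha : a ∈ ℬ k) {d : ℕ → ℤ} {v : ℕ → V} (hv : ∀ t, v t ∈ ℬ (d t))
    (τ : Equiv.Perm (Fin n)) :
    jacobiTerm l (n + 1) j (consSeq k d) (consSeq a v) (insertZero p τ)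
      = ((-1 : 𝕜) ^ (k + koszulE τ d)) •
          l (n - j + 2) (fun u => if (u : ℕ) = 0 then a
            else if (u : ℕ) = 1 then l j (fun w => permV τ v (w : ℕ))
            else permV τ v (j + (u : ℕ) - 2)) := by
  have hjn : j ≤ n := by omega
  let e : ℕ → ℤ := fun t => if h : t < n then d (τ ⟨t, h⟩) else 0
  let S : ℤ := ∑ t : Fin j, e t
  have hlj : l j (fun w => permV τ v (w : ℕ)) ∈ ℬ (1 + S) :=
    hldeg j hj (fun w => e w) _ fun w => permV_mem τ hv w
  have hE : koszulE (insertZero p τ) (consSeq k d) = koszulE τ d + k * S := by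
    rw [koszulE_insertZero, hp]
    congr 2
    have h1 : ∀ t : Fin n, (if (t : ℕ) < j then d (τ t) else 0)
        = (fun t : ℕ => if t < j then e t else 0) t := by
      intro t; simp [e]
    rw [Finset.sum_congr rfl fun t _ => h1 t,
      Fin.sum_univ_eq_sum_range (fun t : ℕ => if t < j then e t else 0), ← Finset.sum_filter]
    simp only [S]
    rw [Fin.sum_univ_eq_sum_range e]
    congr 1
    ext t
    simp only [Finset.mem_filter, Finset.mem_range]
    omega
  let w : ℕ → V := consSeq a (consSeq (l j (fun w => permV τ v (w : ℕ)))
    fun t => permV τ v (j + t))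
  have hw : ∀ t, w t ∈ ℬ (consSeq k (consSeq (1 + S) fun t => e (j + t)) t) := by
    rintro (_ | _ | t)
    · exact ha
    · exact hlj
    · exact permV_mem τ hv (j + t)
  have hsymm := hlsym (n - j + 2) _ w hw 0 (by omega)
  have hleft : l (n + 1 - j + 1) (fun u => if (u : ℕ) = 0 then
        l j (fun w => permV (insertZero p τ) (consSeq a v) (w : ℕ))
      else permV (insertZero p τ) (consSeq a v) (j + (u : ℕ) - 1))
      = l (n - j + 2) (fun u => if (u : ℕ) = 0 then w (0 + 1) else if (u : ℕ) = 0 + 1 then w 0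
          else w (u : ℕ)) := by
    refine multilinear_congr l (by omega) fun i _ _ => ?_
    rcases i with _ | _ | i
    · simp only [if_true, w, consSeq_succ, consSeq_zero]
      congr 1
      funext t
      exact permV_insertZero_of_lt p τ a v (by omega)
    · simpa [w, hp] using permV_insertZero_self p τ a v
    · simpa [w, add_assoc] using permV_insertZero_succ p τ a v (show (p : ℕ) ≤ j + i by omega)
  have hright : l (n - j + 2) (fun u => w (u : ℕ))
      = l (n - j + 2) (fun u => if (u : ℕ) = 0 then a
            else if (u : ℕ) = 1 then l j (fun w => permV τ v (w : ℕ))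
            else permV τ v (j + (u : ℕ) - 2)) := by
    refine multilinear_congr l rfl fun i _ _ => ?_
    rcases i with _ | _ | i
    · simp [w]
    · simp [w]
    · simp [w, show j + (i + 1 + 1) - 2 = j + i by omega]
  rw [jacobiTerm, hE, hleft, hsymm, hright, smul_smul,
    ← zpow_add₀ (neg_ne_zero.mpr one_ne_zero)]
  congr 1
  simp only [consSeq_zero, zero_add]
  rw [show consSeq k (consSeq (1 + S) fun t => e (j + t)) 1 = 1 + S from rfl,
    show koszulE τ d + k * S + k * (1 + S) = (k + koszulE τ d) + 2 * (k * S) by ring,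
    zpow_add₀ (neg_ne_zero.mpr one_ne_zero), zpow_mul]
  simp

end

end Stmt10

open Stmt10 in
/-- Let `(V,{l_n})` be an `L_∞` algebra over a field of characteristic
`0` and `a ∈ V` homogeneous of degree `k` with `l₁(a) = 0`.  Then the maps
`θ_n(v₁,…,vₙ) := l_{n+1}(a,v₁,…,vₙ)` form a strong homotopy derivation of degree `k+1`
of `(V,{l_n})`:  they are homogeneous of degree `k+1` and satisfy the strong homotopy
derivation relations. -/
theorem statement10 {𝕜 V : Type} [Field 𝕜] [CharZero 𝕜] [AddCommGroup V] [Module 𝕜 V]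
    (ℬ : ℤ → Submodule 𝕜 V) (hgr : DirectSum.IsInternal ℬ)
    (l : ∀ n : ℕ, MultilinearMap 𝕜 (fun _ : Fin n => V) V)
    (hldeg : ∀ n : ℕ, 1 ≤ n → ∀ (d : Fin n → ℤ) (v : Fin n → V), (∀ j, v j ∈ ℬ (d j)) →
        l n v ∈ ℬ (1 + ∑ j, d j))
    (hlsym : GradedSymm 𝕜 ℬ l)
    (hlrel : LInftyRel 𝕜 ℬ l)
    (k : ℤ) (a : V) (ha : a ∈ ℬ k) (hla : l 1 (fun _ => a) = 0) :
    (∀ (n : ℕ), 1 ≤ n → ∀ (d : ℕ → ℤ) (v : ℕ → V), (∀ t, v t ∈ ℬ (d t)) →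
        l (n + 1) (fun u => if (u : ℕ) = 0 then a else v ((u : ℕ) - 1))
          ∈ ℬ ((k + 1) + ∑ t ∈ Finset.range n, d t)) ∧
    (∀ (n : ℕ), 1 ≤ n → ∀ (d : ℕ → ℤ) (v : ℕ → V), (∀ t, v t ∈ ℬ (d t)) →
      ∑ j ∈ Finset.Icc 1 n,
        ∑ σ ∈ Finset.univ.filter (fun σ : Equiv.Perm (Fin n) => IsUnshuffle j σ),
          ( ((-1 : 𝕜) ^ koszulE σ d) •
              l (n - j + 2) (fun u => if (u : ℕ) = 0 then a
                else if (u : ℕ) = 1 then l j (fun w => permV σ v (w : ℕ))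
                else permV σ v (j + (u : ℕ) - 2))
            - ((-1 : 𝕜) ^ ((k + 1) + koszulE σ d)) •
              l (n - j + 1) (fun u => if (u : ℕ) = 0 then
                  l (j + 1) (fun w => if (w : ℕ) = 0 then a
                    else permV σ v ((w : ℕ) - 1))
                else permV σ v (j + (u : ℕ) - 1)) )
        = 0) := by
  constructor
  · intro n _ d v hv
    have h := hldeg (n + 1) (by omega) (fun u => consSeq k d u) (fun u => consSeq a v u) (by
      rintro ⟨_ | u, hu⟩
      · exact ha
      · exact hv u)
    rw [Fin.sum_univ_succ] at h
    simp only [Fin.val_zero, Fin.val_succ, consSeq_zero, consSeq_succ] at h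
    rw [Fin.sum_univ_eq_sum_range] at h
    rwa [show k + 1 + ∑ t ∈ Finset.range n, d t = 1 + (k + ∑ t ∈ Finset.range n, d t) by ring]
  · intro n hn d v hv
    have hrel := hlrel (n + 1) (by omega) (consSeq k d) (consSeq a v) (by
      rintro (_ | t)
      · exact ha
      · exact hv t)
    change ∑ j ∈ Icc 1 (n + 1), ∑ σ with IsUnshuffle j σ,
      jacobiTerm l (n + 1) j (consSeq k d) (consSeq a v) σ = 0 at hrel
    let A : ℕ → Equiv.Perm (Fin n) → V := fun j τ =>
      l (n - j + 2) (fun u => if (u : ℕ) = 0 then a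
        else if (u : ℕ) = 1 then l j (fun w => permV τ v (w : ℕ))
        else permV τ v (j + (u : ℕ) - 2))
    let B : ℕ → Equiv.Perm (Fin n) → V := fun j τ =>
      l (n - j + 1) (fun u => if (u : ℕ) = 0 then
          l (j + 1) (fun w => if (w : ℕ) = 0 then a else permV τ v ((w : ℕ) - 1))
        else permV τ v (j + (u : ℕ) - 1))
    let SA : ℕ → V := fun j => ∑ τ with IsUnshuffle j τ, ((-1 : 𝕜) ^ (k + koszulE τ d)) • A j τ
    let SB : ℕ → V := fun j => ∑ τ with IsUnshuffle j τ, ((-1 : 𝕜) ^ koszulE τ d) • B j τ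
    have hB0 : SB 0 = 0 := by
      refine Finset.sum_eq_zero fun τ _ => ?_
      have : B 0 τ = 0 := by
        refine (l (n - 0 + 1)).map_coord_zero 0 ?_
        simp only [Fin.val_zero, if_true]
        rw [← hla]
        congr 1
        funext w
        exact if_pos (by omega)
      rw [this, smul_zero]
    have hsum : ∑ j ∈ Icc 1 n, SA j + ∑ j ∈ Icc 1 n, SB j = 0 := by
      have hlow : ∀ j ∈ Icc 1 n, ∑ σ with IsUnshuffle j σ,
          jacobiTerm l (n + 1) j (consSeq k d) (consSeq a v) σ = SB (j - 1) + SA j := by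
        intro j hj
        obtain ⟨h1, h2⟩ := Finset.mem_Icc.mp hj
        obtain ⟨i, rfl⟩ : ∃ i, j = i + 1 := ⟨j - 1, by omega⟩
        rw [sum_isUnshuffle_of_le ⟨i + 1, by omega⟩ rfl]
        congr 1
        · exact Finset.sum_congr rfl fun τ _ => jacobiTerm_insertZero_zero l n i k a d v τ
        · exact Finset.sum_congr rfl fun τ _ => jacobiTerm_insertZero hldeg hlsym h1 _ rfl ha hv τ
      rw [Finset.sum_Icc_succ_top (by omega), Finset.sum_congr rfl hlow, sum_isUnshuffle_top,
        Finset.sum_congr rfl fun τ _ => jacobiTerm_insertZero_zero l n n k a d v τ,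
        Finset.sum_add_distrib, add_right_comm] at hrel
      have hshift : ∑ j ∈ Icc 1 n, SB (j - 1) + SB n = ∑ j ∈ Icc 1 n, SB j := by
        have e1 : ∀ f : ℕ → V, ∑ j ∈ Icc 1 n, f j = ∑ j ∈ Finset.range n, f (j + 1) := fun f => by
          rw [Finset.range_eq_Ico, Finset.sum_Ico_add' f 0 n 1]
          rfl
        rw [e1, e1]
        simp only [Nat.add_sub_cancel]
        rw [← Finset.sum_range_succ, Finset.sum_range_succ', hB0, add_zero]
      rw [add_comm, ← hshift]
      exact hrel
    have hfinal := congrArg (fun x => ((-1 : 𝕜) ^ k) • x) hsum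
    simp only [smul_zero] at hfinal
    rw [← hfinal, ← Finset.sum_add_distrib, Finset.smul_sum]
    refine Finset.sum_congr rfl fun j _ => ?_
    rw [← Finset.sum_add_distrib, Finset.smul_sum]
    refine Finset.sum_congr rfl fun τ _ => ?_
    have hne : (-1 : 𝕜) ≠ 0 := neg_ne_zero.mpr one_ne_zero
    have hkk : (-1 : 𝕜) ^ k * (-1 : 𝕜) ^ k = 1 := by
      rw [← mul_zpow]; simp
    change _ • A j τ - _ • B j τ = _
    rw [smul_add, smul_smul, smul_smul, zpow_add₀ hne k, ← mul_assoc, hkk, one_mul,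
      zpow_add₀ hne (k + 1), zpow_add_one₀ hne, mul_neg_one, neg_mul, neg_smul, sub_neg_eq_add]
end
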